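/- Let −1 < a < 0 and r ≥ 2, with conjugate exponent r' = r/(r−1). There exists a constant C(a,r) > 0 such that for every t ≠ 0 and every φ ∈ 𝒮⁺ one has ‖S_a(t)φ · k₁^{1−2/r}‖_{L^r_a} ≤ C(a,r) (|t|^{−(a+1)(1/2 − 1/r)} + |t|^{−(1/2 − 1/r)}) ‖φ · k₁^{1−2/r'}‖_{L^{r'}_a}. -/

import Mathlib

open MeasureTheory Filter Set

noncomputable def besselJ (ν : ℂ) (z : ℝ) : ℂ :=
  ∑' k : ℕ, ((-1 : ℂ) ^ k / (Complex.Gamma (k + 1) * Complex.Gamma (ν + k + 1))) *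
    ((z : ℂ) / 2) ^ (2 * (k : ℂ) + ν)

noncomputable def DIter : ℕ → (ℝ → ℂ) → (ℝ → ℂ)
  | 0, φ => φ
  | k + 1, φ => fun x => (1 / (x : ℂ)) * deriv (DIter k φ) x

def SPlus (φ : ℝ → ℂ) : Prop :=
  ContDiffOn ℝ (⊤ : ℕ∞) φ (Ioi 0) ∧
  ∀ m k : ℕ, ∃ C : ℝ, ∀ x > (0:ℝ), ‖(x : ℂ) ^ m * DIter k φ x‖ ≤ C

noncomputable def Skernel (a x y t : ℝ) : ℂ :=
  if 0 < t then
    Complex.exp (-(Complex.I) * (((a + 1) * Real.pi / 4 : ℝ) : ℂ)) *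
      (((2 * |t|) ^ (-(a + 1) / 2) : ℝ) : ℂ) *
      (((x * y / (2 * |t|)) ^ ((1 - a) / 2) : ℝ) : ℂ) *
      besselJ (((a - 1) / 2 : ℝ) : ℂ) (x * y / (2 * |t|)) *
      Complex.exp (Complex.I * ((((x ^ 2 + y ^ 2) / (4 * |t|)) : ℝ) : ℂ))
  else
    Complex.exp ((Complex.I) * (((a + 1) * Real.pi / 4 : ℝ) : ℂ)) *
      (((2 * |t|) ^ (-(a + 1) / 2) : ℝ) : ℂ) *
      (((x * y / (2 * |t|)) ^ ((1 - a) / 2) : ℝ) : ℂ) *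
      besselJ (((a - 1) / 2 : ℝ) : ℂ) (x * y / (2 * |t|)) *
      Complex.exp (-(Complex.I) * ((((x ^ 2 + y ^ 2) / (4 * |t|)) : ℝ) : ℂ))

noncomputable def Sop (a t : ℝ) (φ : ℝ → ℂ) (x : ℝ) : ℂ :=
  ∫ y in Ioi (0:ℝ), Skernel a x y t * φ y * ((y ^ a : ℝ) : ℂ)

noncomputable def LrA (a r : ℝ) (f : ℝ → ℂ) : ℝ :=
  (∫ x in Ioi (0:ℝ), ‖f x‖ ^ r * x ^ a) ^ (1 / r)

noncomputable def k1 (a x : ℝ) : ℝ := min 1 (x ^ (a / 2))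

noncomputable def u1 (a x : ℝ) : ℝ := max (x ^ (a / 2)) (x ^ a)

/-! Multiplication by `k1` turns `S_a(t)` into an integral operator with respect to the measure
`k1⁻² x^a dx`, and this one measure serves all exponents: `k1^(1 - 2/q)` in the `L^q_a` norm
becomes the fixed multiplier `k1`. In this form the kernel is bounded by a multiple of
`|t|^(-(a + 1)/2) + |t|^(-1/2)`, an `L¹ → L^∞` bound. Up to unimodular factors and a dilation the
operator is a Hankel transform, hence bounded on `L²` uniformly in `t`: the leading term of
`√z J_ν z` at infinity gives two Fourier transforms, and Schur's test handles the remainder.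
The estimate follows by real interpolation, in which the cut of `φ` depends on the level and on
the norm of `φ`; this gives the strong-type bound with the right power of the decay rate. -/

/-! ### Entire power series and the Bessel function -/

lemma hasDerivAt_tsum_mul_pow {𝕜 : Type*} [NontriviallyNormedField 𝕜] [CompleteSpace 𝕜]
    {c : ℕ → 𝕜} (hc : ∀ R : NNReal, Summable fun k => ‖c k‖ * (R : ℝ) ^ k) (u : 𝕜) :
    HasDerivAt (fun u => ∑' k, c k * u ^ k) (∑' k : ℕ, ((k : 𝕜) + 1) * c (k + 1) * u ^ k) u := by
  set p := FormalMultilinearSeries.ofScalars 𝕜 c with hp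
  have hradius : p.radius = ⊤ := p.radius_eq_top_of_summable_norm fun R => by
    simpa only [hp, FormalMultilinearSeries.ofScalars_norm] using hc R
  have hsum : p.sum = fun u => ∑' k, c k * u ^ k := by
    simpa only [smul_eq_mul] using! FormalMultilinearSeries.ofScalarsSum_eq_tsum (E := 𝕜) c
  have hu : ‖u‖ₑ < p.radius := hradius ▸ enorm_lt_top
  have hderiv := (p.hasFDerivAt_sum hu).hasDerivAt
  rw [hsum] at hderiv
  refine hderiv.congr_deriv ?_
  have hd : HasSum (fun k => p.derivSeries k fun _ => u) (p.derivSeries.sum u) :=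
    p.derivSeries.hasSum (by
      simpa using hu.trans_le p.radius_le_radius_derivSeries)
  refine (hd.mapL (ContinuousLinearMap.apply 𝕜 𝕜 (1 : 𝕜))).tsum_eq.symm.trans ?_
  refine tsum_congr fun k => ?_
  rw [ContinuousLinearMap.apply_apply, FormalMultilinearSeries.apply_eq_pow_smul_coeff,
    smul_apply, FormalMultilinearSeries.derivSeries_coeff_one,
    FormalMultilinearSeries.coeff_ofScalars]
  simp only [smul_eq_mul, nsmul_eq_mul, Nat.cast_add, Nat.cast_one]
  ring

/-- The Taylor coefficients of `z ^ (-ν) * J_ν z` as a function of `z ^ 2`. Since `Real.Gamma`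
vanishes at its poles, this is the usual convention `1 / Γ = 0` there. -/
noncomputable def besselCoeff (ν : ℝ) (k : ℕ) : ℝ :=
  (-1) ^ k / (Real.Gamma (k + 1) * Real.Gamma (ν + k + 1)) * (1 / 2) ^ (2 * (k : ℝ) + ν)

/-- The entire function `z ^ (-ν) * J_ν z`. -/
noncomputable def besselEntire (ν : ℝ) (z : ℝ) : ℝ := ∑' k, besselCoeff ν k * (z ^ 2) ^ k

lemma besselCoeff_succ (ν : ℝ) (k : ℕ) :
    2 * ((k : ℝ) + 1) * besselCoeff ν (k + 1) = -besselCoeff (ν + 1) k := by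
  have hk : (k : ℝ) + 1 ≠ 0 := by positivity
  have hΓ : Real.Gamma ((k + 1 : ℕ) + 1) = (k + 1) * Real.Gamma (k + 1) := by
    rw [← Real.Gamma_add_one hk, Nat.cast_succ]
  have harg : ν + (k + 1 : ℕ) + 1 = ν + 1 + k + 1 := by push_cast; ring
  have hpow : (1 / 2 : ℝ) ^ (2 * ((k + 1 : ℕ) : ℝ) + ν) =
      (1 / 2) ^ (2 * (k : ℝ) + (ν + 1)) / 2 := by
    rw [show 2 * ((k + 1 : ℕ) : ℝ) + ν = 2 * (k : ℝ) + (ν + 1) + 1 by push_cast; ring,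
      Real.rpow_add_one (by norm_num)]
    ring
  rw [besselCoeff, besselCoeff, hΓ, harg, hpow, pow_succ]
  field_simp

lemma besselCoeff_eq_mul_besselCoeff_add_one (ν : ℝ) (k : ℕ) :
    besselCoeff ν k = 2 * (ν + k + 1) * besselCoeff (ν + 1) k := by
  have hΓ : (Real.Gamma (ν + k + 1))⁻¹ = (ν + k + 1) * (Real.Gamma (ν + 1 + k + 1))⁻¹ := by
    rw [show ν + 1 + k + 1 = ν + k + 1 + 1 by ring]
    rcases eq_or_ne (ν + k + 1) 0 with h | h
    · simp [h, Real.Gamma_zero]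
    · rw [Real.Gamma_add_one h, mul_inv, mul_inv_cancel_left₀ h]
  rw [besselCoeff, besselCoeff, ← add_assoc (2 * (k : ℝ)), Real.rpow_add_one (by norm_num),
    div_eq_mul_inv, mul_inv, hΓ]
  ring

lemma summable_norm_besselCoeff_mul_pow (ν : ℝ) (R : NNReal) :
    Summable fun k => ‖besselCoeff ν k‖ * (R : ℝ) ^ k := by
  refine summable_of_ratio_norm_eventually_le (r := 1 / 2) (by norm_num) ?_
  filter_upwards [eventually_ge_atTop ⌈|ν| + R⌉₊] with k hk
  have hkR : |ν| + R ≤ k := Nat.ceil_le.1 hk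
  have hrec : besselCoeff ν k = -(4 * ((k : ℝ) + 1) * (ν + k + 1) * besselCoeff ν (k + 1)) := by
    rw [besselCoeff_eq_mul_besselCoeff_add_one]
    linear_combination 2 * (ν + k + 1) * besselCoeff_succ ν k
  have hR : (R : ℝ) ≤ ν + k + 1 := by linarith [neg_abs_le ν]
  have hprod : (R : ℝ) ≤ 1 / 2 * (4 * ((k : ℝ) + 1) * (ν + k + 1)) := by
    nlinarith [Nat.cast_nonneg (α := ℝ) k, R.2]
  have hpos : 0 ≤ 4 * ((k : ℝ) + 1) * (ν + k + 1) := by linarith [R.2, hprod]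
  rw [hrec, norm_mul, norm_mul, norm_norm, norm_norm, norm_neg, norm_mul, Real.norm_of_nonneg hpos,
    norm_pow, norm_pow, NNReal.norm_eq, pow_succ]
  calc ‖besselCoeff ν (k + 1)‖ * ((R : ℝ) ^ k * R)
      ≤ ‖besselCoeff ν (k + 1)‖ * (R ^ k * (1 / 2 * (4 * ((k : ℝ) + 1) * (ν + k + 1)))) := by gcongr
    _ = _ := by ring

lemma summable_besselCoeff_mul_pow (ν u : ℝ) : Summable fun k => besselCoeff ν k * u ^ k :=
  .of_norm_bounded (summable_norm_besselCoeff_mul_pow ν ‖u‖₊) fun k => by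
    rw [norm_mul, norm_pow, coe_nnnorm]

lemma hasDerivAt_besselEntire (ν z : ℝ) :
    HasDerivAt (besselEntire ν) (-(z * besselEntire (ν + 1) z)) z := by
  have hsq : HasDerivAt (fun z : ℝ => z ^ 2) (2 * z) z := by simpa using hasDerivAt_pow 2 z
  refine ((hasDerivAt_tsum_mul_pow (summable_norm_besselCoeff_mul_pow ν) (z ^ 2)).comp z
    hsq).congr_deriv ?_
  rw [besselEntire, ← tsum_mul_left, ← tsum_mul_right, ← tsum_neg]
  exact tsum_congr fun k => by linear_combination z * (z ^ 2) ^ k * besselCoeff_succ ν k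

lemma continuous_besselEntire (ν : ℝ) : Continuous (besselEntire ν) :=
  continuous_iff_continuousAt.2 fun z => (hasDerivAt_besselEntire ν z).continuousAt

lemma besselEntire_eq_sub (ν z : ℝ) :
    besselEntire ν z = 2 * (ν + 1) * besselEntire (ν + 1) z - z ^ 2 * besselEntire (ν + 2) z := by
  set u := z ^ 2
  have hterm (k : ℕ) : besselCoeff ν k * u ^ k =
      2 * (ν + 1) * (besselCoeff (ν + 1) k * u ^ k) + 2 * k * besselCoeff (ν + 1) k * u ^ k := by
    rw [besselCoeff_eq_mul_besselCoeff_add_one]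
    ring
  have hlead := (summable_besselCoeff_mul_pow (ν + 1) u).mul_left (2 * (ν + 1))
  have htail : HasSum (fun k : ℕ => 2 * (k : ℝ) * besselCoeff (ν + 1) k * u ^ k)
      (-(u * besselEntire (ν + 2) z)) := by
    rw [← hasSum_nat_add_iff' 1]
    simp only [Finset.range_one, Finset.sum_singleton, Nat.cast_zero, mul_zero, zero_mul, sub_zero]
    refine ((summable_besselCoeff_mul_pow (ν + 2) u).hasSum.mul_left u).neg.congr_fun ?_
    intro k
    have h := besselCoeff_succ (ν + 1) k
    rw [show ν + 1 + 1 = ν + 2 by ring] at h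
    push_cast
    linear_combination u ^ (k + 1) * h
  rw [besselEntire.eq_def ν, tsum_congr hterm, hlead.tsum_add htail.summable, htail.tsum_eq,
    tsum_mul_left, sub_eq_add_neg]
  rfl

lemma rpow_neg_mul_besselJ (ν : ℝ) {z : ℝ} (hz : 0 < z) :
    ((z ^ (-ν) : ℝ) : ℂ) * besselJ (ν : ℂ) z = (besselEntire ν z : ℂ) := by
  rw [besselJ, besselEntire, ← tsum_mul_left, Complex.ofReal_tsum]
  refine tsum_congr fun k => ?_
  have hpow : ((z : ℂ) / 2) ^ (2 * (k : ℂ) + (ν : ℂ)) =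
      ((1 / 2 : ℝ) ^ (2 * (k : ℝ) + ν) * (z ^ 2) ^ k * z ^ ν : ℝ) := by
    rw [mul_assoc, ← pow_mul, ← Real.rpow_natCast, ← Real.rpow_add hz, Nat.cast_mul,
      Nat.cast_ofNat, ← Real.mul_rpow (by norm_num) hz.le, Complex.ofReal_cpow (by positivity)]
    push_cast
    congr 1
    ring
  have hΓ₁ : Complex.Gamma ((k : ℂ) + 1) = (Real.Gamma (k + 1) : ℝ) := by
    rw [← Complex.Gamma_ofReal]
    push_cast
    rfl
  have hΓ₂ : Complex.Gamma ((ν : ℂ) + k + 1) = (Real.Gamma (ν + k + 1) : ℝ) := by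
    rw [← Complex.Gamma_ofReal]
    push_cast
    rfl
  have hcancel : ((z ^ (-ν) : ℝ) : ℂ) * (z ^ ν : ℝ) = 1 := by
    rw [← Complex.ofReal_mul, ← Real.rpow_add hz, neg_add_cancel, Real.rpow_zero,
      Complex.ofReal_one]
  rw [hpow, hΓ₁, hΓ₂, besselCoeff]
  push_cast
  linear_combination ((-1) ^ k / (Real.Gamma (k + 1) * Real.Gamma (ν + k + 1)) *
    (((1 / 2 : ℝ) ^ (2 * (k : ℝ) + ν) : ℝ) * (z ^ 2) ^ k)) * hcancel

/-! ### Asymptotics of the Bessel function -/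

lemma norm_sub_le_div_sub_div_of_norm_deriv_le {E : Type*} [NormedAddCommGroup E]
    [NormedSpace ℝ E] {w w' : ℝ → E} {K a b : ℝ} (ha : 0 < a) (hab : a ≤ b)
    (hw : ∀ z ≥ a, HasDerivAt w (w' z) z) (hK : ∀ z ≥ a, ‖w' z‖ ≤ K / z ^ 2) :
    ‖w b - w a‖ ≤ K / a - K / b := by
  have hB (z : ℝ) (hz : a ≤ z) : HasDerivAt (fun z => K / a - K / z) (K / z ^ 2) z := by
    have hz0 : z ≠ 0 := (ha.trans_le hz).ne'
    refine (((hasDerivAt_inv hz0).const_mul K).const_sub (K / a)).congr_deriv ?_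
    ring
  refine image_norm_le_of_norm_deriv_right_le_deriv_boundary' (f := fun z => w z - w a)
    (f' := w') (fun z hz => ((hw z hz.1).sub_const _).continuousAt.continuousWithinAt)
    (fun z hz => ((hw z hz.1).sub_const _).hasDerivWithinAt) (by simp)
    (fun z hz => (hB z hz.1).continuousAt.continuousWithinAt)
    (fun z hz => (hB z hz.1).hasDerivWithinAt) (fun z hz => hK z hz.1) ⟨hab, le_rfl⟩

lemma exists_norm_sub_le_div_of_norm_deriv_le {E : Type*} [NormedAddCommGroup E]
    [NormedSpace ℝ E] [CompleteSpace E] {w w' : ℝ → E} {K a : ℝ} (ha : 0 < a)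
    (hw : ∀ z ≥ a, HasDerivAt w (w' z) z) (hK : ∀ z ≥ a, ‖w' z‖ ≤ K / z ^ 2) :
    ∃ L : E, ∀ z ≥ a, ‖w z - L‖ ≤ K / z := by
  have hK0 : 0 ≤ K := by
    have := (norm_nonneg _).trans (hK a le_rfl)
    rwa [le_div_iff₀ (by positivity), zero_mul] at this
  have hdist (x y : ℝ) (hx : a ≤ x) (hxy : x ≤ y) : ‖w y - w x‖ ≤ K / x := by
    have hsub := norm_sub_le_div_sub_div_of_norm_deriv_le (ha.trans_le hx) hxy
      (fun z hz => hw z (hx.trans hz)) fun z hz => hK z (hx.trans hz)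
    have : 0 ≤ K / y := div_nonneg hK0 (ha.le.trans (hx.trans hxy))
    linarith
  have htail : Tendsto (fun x : ℝ => K / max x a) atTop (nhds 0) :=
    tendsto_const_nhds.div_atTop (tendsto_atTop_mono (fun x => le_max_left x a) tendsto_id)
  have hcauchy : CauchySeq fun x : ℝ => w (max x a) :=
    cauchySeq_of_le_tendsto_0' _ (fun x y hxy => by
      rw [dist_eq_norm_sub']
      exact hdist _ _ (le_max_right x a) (max_le_max_right a hxy)) htail
  obtain ⟨L, hL⟩ := cauchySeq_tendsto_of_complete hcauchy
  refine ⟨L, fun z hz => ?_⟩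
  rw [norm_sub_rev]
  refine le_of_tendsto (hL.sub_const (w z)).norm ?_
  filter_upwards [eventually_ge_atTop z] with x hx
  rw [max_eq_left (hz.trans hx)]
  exact hdist z x hz hx

section PerturbedOscillator

variable {F F₁ : ℝ → ℝ} {μ : ℝ}

lemma exists_abs_le_of_deriv_eq (hF : ∀ z > 0, HasDerivAt F (F₁ z) z)
    (hF₁ : ∀ z > 0, HasDerivAt F₁ ((μ / z ^ 2 - 1) * F z) z) :
    ∃ M : ℝ, ∀ z ≥ 1, |F z| ≤ M := by
  set E : ℝ → ℝ := fun z => (F z ^ 2 + F₁ z ^ 2) * Real.exp (|μ| / z)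
  have hderiv (z : ℝ) (hz : 0 < z) : HasDerivAt E
      ((2 * (μ * (F z * F₁ z)) - |μ| * (F z ^ 2 + F₁ z ^ 2)) * (Real.exp (|μ| / z) / z ^ 2)) z := by
    have henergy := ((hF z hz).pow 2).add ((hF₁ z hz).pow 2)
    have hexp := ((hasDerivAt_inv hz.ne').const_mul |μ|).exp
    refine (henergy.mul hexp).congr_deriv ?_
    simp only [Pi.add_apply, Pi.pow_apply, ← div_eq_mul_inv]
    push_cast
    ring
  have hcross (z : ℝ) : 2 * (μ * (F z * F₁ z)) ≤ |μ| * (F z ^ 2 + F₁ z ^ 2) := by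
    calc 2 * (μ * (F z * F₁ z)) ≤ 2 * (|μ| * (|F z| * |F₁ z|)) := by
          rw [← abs_mul, ← abs_mul]
          gcongr
          exact le_abs_self _
      _ ≤ |μ| * (|F z| ^ 2 + |F₁ z| ^ 2) := by
          nlinarith [mul_nonneg (abs_nonneg μ) (sq_nonneg (|F z| - |F₁ z|))]
      _ = |μ| * (F z ^ 2 + F₁ z ^ 2) := by rw [sq_abs, sq_abs]
  have hanti : AntitoneOn E (Ici 1) := by
    refine antitoneOn_of_hasDerivWithinAt_nonpos (convex_Ici 1)
      (fun z hz => (hderiv z (one_pos.trans_le hz)).continuousAt.continuousWithinAt)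
      (fun z hz => (hderiv z ?_).hasDerivWithinAt) fun z hz =>
        mul_nonpos_of_nonpos_of_nonneg (sub_nonpos.2 (hcross z)) (by positivity)
    rw [interior_Ici] at hz
    exact one_pos.trans hz
  refine ⟨√(E 1), fun z hz => Real.abs_le_sqrt ?_⟩
  have : 0 < z := one_pos.trans_le hz
  calc F z ^ 2 ≤ F z ^ 2 + F₁ z ^ 2 := le_add_of_nonneg_right (sq_nonneg _)
    _ ≤ E z := le_mul_of_one_le_right (by positivity) (Real.one_le_exp (by positivity))
    _ ≤ E 1 := hanti self_mem_Ici hz hz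

/-- Variation of constants: `e^{-iz} (F' + i F)` has derivative `O(z⁻²)`, hence converges. -/
lemma exists_abs_sub_re_mul_exp_le_of_deriv_eq (hF : ∀ z > 0, HasDerivAt F (F₁ z) z)
    (hF₁ : ∀ z > 0, HasDerivAt F₁ ((μ / z ^ 2 - 1) * F z) z) :
    ∃ (A : ℂ) (C : ℝ), ∀ z ≥ 1, |F z - (A * Complex.exp (Complex.I * z)).re| ≤ C / z := by
  obtain ⟨M, hM⟩ := exists_abs_le_of_deriv_eq hF hF₁
  set w : ℝ → ℂ := fun z => Complex.exp (-(Complex.I * z)) * (F₁ z + Complex.I * F z)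
  have hwderiv (z : ℝ) (hz : 0 < z) :
      HasDerivAt w (Complex.exp (-(Complex.I * z)) * (μ / z ^ 2 * F z)) z := by
    have hexp : HasDerivAt (fun z : ℝ => Complex.exp (-(Complex.I * z)))
        (Complex.exp (-(Complex.I * z)) * (-(Complex.I * 1))) z :=
      ((Complex.ofRealCLM.hasDerivAt (x := z)).const_mul Complex.I).neg.cexp
    refine (hexp.mul ((hF₁ z hz).ofReal_comp.add
      ((hF z hz).ofReal_comp.const_mul Complex.I))).congr_deriv ?_
    simp only [Pi.add_apply]
    push_cast
    linear_combination (-Complex.exp (-(Complex.I * z)) * F z) * Complex.I_sq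
  obtain ⟨L, hL⟩ := exists_norm_sub_le_div_of_norm_deriv_le (K := |μ| * M) one_pos
    (fun z hz => hwderiv z (one_pos.trans_le hz)) fun z hz => by
      rw [norm_mul, norm_mul, Complex.norm_exp, norm_div, norm_pow, Complex.norm_real,
        Complex.norm_real, Complex.norm_real, Real.norm_eq_abs, Real.norm_eq_abs, Real.norm_eq_abs,
        sq_abs, mul_div_right_comm]
      simp only [Complex.neg_re, Complex.mul_re, Complex.I_re, Complex.I_im, Complex.ofReal_re,
        Complex.ofReal_im, zero_mul, mul_zero, sub_zero, neg_zero, Real.exp_zero, one_mul]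
      gcongr
      exact hM z hz
  refine ⟨-Complex.I * L, |μ| * M, fun z hz => ?_⟩
  have hrecover : -Complex.I * w z * Complex.exp (Complex.I * z) = F z - Complex.I * F₁ z := by
    have hcancel : Complex.exp (-(Complex.I * z)) * Complex.exp (Complex.I * z) = 1 := by
      rw [← Complex.exp_add, neg_add_cancel, Complex.exp_zero]
    linear_combination (-Complex.I * (F₁ z + Complex.I * F z)) * hcancel - F z * Complex.I_sq
  have hFre : F z = (-Complex.I * w z * Complex.exp (Complex.I * z)).re := by
    rw [hrecover]
    simp
  calc |F z - (-Complex.I * L * Complex.exp (Complex.I * z)).re|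
      ≤ ‖-Complex.I * (w z - L) * Complex.exp (Complex.I * z)‖ := by
        rw [hFre, ← Complex.sub_re, ← sub_mul, ← mul_sub]
        exact Complex.abs_re_le_norm _
    _ = ‖w z - L‖ := by simp [Complex.norm_exp]
    _ ≤ |μ| * M / z := hL z hz

end PerturbedOscillator

/-- The function `√z * J_ν z`, in which the Bessel equation loses its first-order term. -/
noncomputable def sqrtBessel (ν z : ℝ) : ℝ := z ^ (ν + 1 / 2) * besselEntire ν z

lemma continuousOn_sqrtBessel (ν : ℝ) : ContinuousOn (sqrtBessel ν) (Ioi 0) :=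
  (continuousOn_id.rpow_const fun _ hz => .inl (ne_of_gt hz)).mul
    (continuous_besselEntire ν).continuousOn

lemma exists_abs_sqrtBessel_sub_re_le (ν : ℝ) :
    ∃ (A : ℂ) (C : ℝ), ∀ z ≥ 1,
      |sqrtBessel ν z - (A * Complex.exp (Complex.I * z)).re| ≤ C / z := by
  have hderiv (z : ℝ) (hz : 0 < z) : HasDerivAt (sqrtBessel ν)
      ((ν + 1 / 2) * z ^ (ν - 1 / 2) * besselEntire ν z -
        z ^ (ν + 3 / 2) * besselEntire (ν + 1) z) z := by
    refine ((Real.hasDerivAt_rpow_const (.inl hz.ne')).mul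
      (hasDerivAt_besselEntire ν z)).congr_deriv ?_
    rw [show ν + 1 / 2 - 1 = ν - 1 / 2 by ring, show ν + 3 / 2 = ν + 1 / 2 + 1 by ring,
      Real.rpow_add_one hz.ne']
    ring
  refine exists_abs_sub_re_mul_exp_le_of_deriv_eq (μ := (ν + 1 / 2) * (ν - 1 / 2)) hderiv
    fun z hz => ?_
  refine ((((Real.hasDerivAt_rpow_const (.inl hz.ne')).const_mul (ν + 1 / 2)).mul
    (hasDerivAt_besselEntire ν z)).sub ((Real.hasDerivAt_rpow_const (.inl hz.ne')).mul
      (hasDerivAt_besselEntire (ν + 1) z))).congr_deriv ?_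
  have hpow (n : ℕ) : z ^ (ν - 3 / 2 + n) = z ^ (ν - 3 / 2) * z ^ n :=
    Real.rpow_add_natCast hz.ne' _ _
  rw [sqrtBessel, besselEntire_eq_sub ν z, show ν + 1 + 1 = ν + 2 by ring,
    show ν - 1 / 2 - 1 = ν - 3 / 2 + (0 : ℕ) by push_cast; ring,
    show ν - 1 / 2 = ν - 3 / 2 + (1 : ℕ) by push_cast; ring,
    show ν + 3 / 2 - 1 = ν - 3 / 2 + (2 : ℕ) by push_cast; ring,
    show ν + 3 / 2 = ν - 3 / 2 + (3 : ℕ) by push_cast; ring,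
    show ν + 1 / 2 = ν - 3 / 2 + (2 : ℕ) by push_cast; ring, hpow, hpow, hpow, hpow]
  push_cast
  field_simp
  ring

lemma exists_abs_besselEntire_le_of_le_one (ν : ℝ) :
    ∃ D : ℝ, ∀ z ∈ Icc (0 : ℝ) 1, |besselEntire ν z| ≤ D :=
  isCompact_Icc.exists_bound_of_continuousOn (continuous_besselEntire ν).continuousOn

lemma abs_re_mul_exp_I_mul_le (A : ℂ) (z : ℝ) :
    |(A * Complex.exp (Complex.I * z)).re| ≤ ‖A‖ :=
  (Complex.abs_re_le_norm _).trans_eq (by simp [Complex.norm_exp])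

lemma exists_abs_besselEntire_le (ν : ℝ) :
    ∃ D > 0, ∀ z > 0, |besselEntire ν z| ≤ D * (1 + z ^ (-(ν + 1 / 2))) := by
  obtain ⟨A, C, hC⟩ := exists_abs_sqrtBessel_sub_re_le ν
  obtain ⟨D, hD⟩ := exists_abs_besselEntire_le_of_le_one ν
  have hbound : 0 ≤ |D| + |C| + ‖A‖ := by positivity
  refine ⟨|D| + |C| + ‖A‖ + 1, by positivity, fun z hz => ?_⟩
  have hpow : 0 < z ^ (-(ν + 1 / 2)) := Real.rpow_pos_of_pos hz _
  rcases le_total z 1 with hz1 | hz1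
  · have hle := (hD z ⟨hz.le, hz1⟩).trans (le_abs_self D)
    nlinarith [norm_nonneg A, abs_nonneg C, abs_nonneg D]
  · have hsqrt : |sqrtBessel ν z| ≤ |C| + ‖A‖ := by
      have hCz : C / z ≤ |C| := (div_le_div_of_nonneg_right (le_abs_self C) hz.le).trans
        (div_le_self (abs_nonneg C) hz1)
      have htri := abs_sub_abs_le_abs_sub (sqrtBessel ν z) (A * Complex.exp (Complex.I * z)).re
      linarith [hC z hz1, abs_re_mul_exp_I_mul_le A z]
    calc |besselEntire ν z| = |sqrtBessel ν z| * z ^ (-(ν + 1 / 2)) := by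
          rw [sqrtBessel, abs_mul, abs_of_pos (Real.rpow_pos_of_pos hz _), mul_right_comm,
            ← Real.rpow_add hz, add_neg_cancel, Real.rpow_zero, one_mul]
      _ ≤ (|D| + |C| + ‖A‖ + 1) * (1 + z ^ (-(ν + 1 / 2))) :=
          mul_le_mul (by linarith [abs_nonneg D]) (by linarith) hpow.le (by linarith)

lemma aestronglyMeasurable_sqrtBessel_sub_re_mul_rpow (ν : ℝ) (A : ℂ) (p : ℝ) :
    AEStronglyMeasurable
      (fun z : ℝ => (sqrtBessel ν z - (A * Complex.exp (Complex.I * z)).re) * z ^ p)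
      (volume.restrict (Ioi 0)) :=
  (((continuousOn_sqrtBessel ν).sub (by fun_prop)).mul
    (continuousOn_id.rpow_const fun _ hz => .inl (ne_of_gt hz))).aestronglyMeasurable
      measurableSet_Ioi

lemma integrableOn_Ioc_sqrtBessel_sub_re_mul_rpow {ν : ℝ} (hν : -1 < ν) (A : ℂ) :
    IntegrableOn
      (fun z : ℝ => (sqrtBessel ν z - (A * Complex.exp (Complex.I * z)).re) * z ^ (-(1 / 2) : ℝ))
      (Ioc 0 1) := by
  obtain ⟨D, hD⟩ := exists_abs_besselEntire_le_of_le_one ν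
  have hdom : IntegrableOn (fun z : ℝ => D * z ^ ν + ‖A‖ * z ^ (-(1 / 2) : ℝ)) (Ioc 0 1) :=
    (intervalIntegrable_iff_integrableOn_Ioc_of_le zero_le_one).1
      (((intervalIntegral.intervalIntegrable_rpow' hν).const_mul D).add
        ((intervalIntegral.intervalIntegrable_rpow' (by norm_num)).const_mul ‖A‖))
  refine hdom.mono' ((aestronglyMeasurable_sqrtBessel_sub_re_mul_rpow ν A _).mono_set
    Ioc_subset_Ioi_self) ((ae_restrict_iff' measurableSet_Ioc).2 (ae_of_all _ fun z hz => ?_))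
  have hpow : z ^ (ν + 1 / 2) * z ^ (-(1 / 2) : ℝ) = z ^ ν := by
    rw [← Real.rpow_add hz.1, add_neg_cancel_right]
  have hpos : 0 ≤ z ^ (ν + 1 / 2) := Real.rpow_nonneg hz.1.le _
  have hdiff : |sqrtBessel ν z - (A * Complex.exp (Complex.I * z)).re| ≤
      z ^ (ν + 1 / 2) * D + ‖A‖ := by
    refine (abs_sub _ _).trans (add_le_add ?_ (abs_re_mul_exp_I_mul_le A z))
    rw [sqrtBessel, abs_mul, abs_of_nonneg hpos]
    exact mul_le_mul_of_nonneg_left (hD z ⟨hz.1.le, hz.2⟩) hpos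
  rw [norm_mul, Real.norm_of_nonneg (Real.rpow_nonneg hz.1.le (-(1 / 2))), Real.norm_eq_abs]
  calc |sqrtBessel ν z - (A * Complex.exp (Complex.I * z)).re| * z ^ (-(1 / 2) : ℝ)
      ≤ (z ^ (ν + 1 / 2) * D + ‖A‖) * z ^ (-(1 / 2) : ℝ) :=
        mul_le_mul_of_nonneg_right hdiff (Real.rpow_nonneg hz.1.le _)
    _ = D * z ^ ν + ‖A‖ * z ^ (-(1 / 2) : ℝ) := by rw [← hpow]; ring

lemma exists_integrableOn_Ioi_one_sqrtBessel_sub_re_mul_rpow (ν : ℝ) :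
    ∃ A : ℂ, IntegrableOn
      (fun z : ℝ => (sqrtBessel ν z - (A * Complex.exp (Complex.I * z)).re) * z ^ (-(1 / 2) : ℝ))
      (Ioi 1) := by
  obtain ⟨A, C, hC⟩ := exists_abs_sqrtBessel_sub_re_le ν
  have hdom : IntegrableOn (fun z : ℝ => C * z ^ (-(3 / 2) : ℝ)) (Ioi 1) :=
    (integrableOn_Ioi_rpow_of_lt (by norm_num) one_pos).const_mul C
  refine ⟨A, hdom.mono' ((aestronglyMeasurable_sqrtBessel_sub_re_mul_rpow ν A _).mono_set
    (Ioi_subset_Ioi zero_le_one)) ((ae_restrict_iff' measurableSet_Ioi).2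
      (ae_of_all _ fun z hz => ?_))⟩
  have hz0 : 0 < z := one_pos.trans hz
  rw [norm_mul, Real.norm_of_nonneg (Real.rpow_nonneg hz0.le _),
    show (-(3 / 2) : ℝ) = -(1 / 2) - 1 by norm_num, Real.rpow_sub_one hz0.ne', mul_div_left_comm,
    mul_comm _ (C / z)]
  exact mul_le_mul_of_nonneg_right (hC z (le_of_lt hz)) (Real.rpow_nonneg hz0.le _)

lemma exists_integrableOn_sqrtBessel_sub_re_mul_rpow {ν : ℝ} (hν : -1 < ν) :
    ∃ A : ℂ, IntegrableOn
      (fun z : ℝ => (sqrtBessel ν z - (A * Complex.exp (Complex.I * z)).re) * z ^ (-(1 / 2) : ℝ))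
      (Ioi 0) := by
  obtain ⟨A, hA⟩ := exists_integrableOn_Ioi_one_sqrtBessel_sub_re_mul_rpow ν
  refine ⟨A, ?_⟩
  rw [← Ioc_union_Ioi_eq_Ioi zero_le_one]
  exact (integrableOn_Ioc_sqrtBessel_sub_re_mul_rpow hν A).union hA

/-! ### `L²` bounds for integral operators -/

lemma eLpNorm_two_sq {X ε : Type*} [MeasurableSpace X] [ENorm ε] (f : X → ε) (μ : Measure X) :
    eLpNorm f 2 μ ^ 2 = ∫⁻ x, ‖f x‖ₑ ^ 2 ∂μ := by
  simpa using eLpNorm_nnreal_pow_eq_lintegral (f := f) (μ := μ) two_ne_zero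

section Plancherel

open scoped FourierTransform

variable {V F : Type*} [NormedAddCommGroup V] [InnerProductSpace ℝ V] [FiniteDimensional ℝ V]
  [MeasurableSpace V] [BorelSpace V] [NormedAddCommGroup F] [InnerProductSpace ℂ F]
  [CompleteSpace F]

lemma fourier_ae_eq_fourier_toLp {f : V → F} (hf : Integrable f) (hf2 : MemLp f 2) :
    𝓕 f =ᵐ[volume] (𝓕 (hf2.toLp f) : Lp F 2 (volume : Measure V)) := by
  have hcont : Continuous (𝓕 f) :=
    VectorFourier.fourierIntegral_continuous Real.continuous_fourierChar continuous_inner hf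
  refine ae_eq_of_integral_contDiff_smul_eq hcont.locallyIntegrable
    ((Lp.memLp _).locallyIntegrable one_le_two) fun u hu huc => ?_
  have hsupp : HasCompactSupport (Complex.ofRealCLM ∘ u) := huc.comp_left rfl
  have hsmooth : ContDiff ℝ (⊤ : ℕ∞) (Complex.ofRealCLM ∘ u) := by fun_prop
  set s := hsupp.toSchwartzMap hsmooth with hs
  have hself_adjoint : ∫ x, s x • 𝓕 f x = ∫ x, (𝓕 s) x • f x := by
    simpa using! (VectorFourier.integral_fourierIntegral_smul_eq_flip (L := innerₗ V)
      Real.continuous_fourierChar continuous_inner (s.integrable (μ := volume)) hf).symm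
  have hdistribution := congrArg (fun T => T s) (Lp.fourier_toTemperedDistribution_eq (hf2.toLp f))
  simp only [TemperedDistribution.fourier_apply, Lp.toTemperedDistribution_apply] at hdistribution
  calc ∫ x, u x • 𝓕 f x = ∫ x, s x • 𝓕 f x := by simp [hs]
    _ = ∫ x, (𝓕 s) x • f x := hself_adjoint
    _ = ∫ x, (𝓕 s) x • hf2.toLp f x :=
        integral_congr_ae (hf2.coeFn_toLp.mono fun x hx => by simp only [hx])
    _ = ∫ x, s x • (𝓕 (hf2.toLp f) : Lp F 2 (volume : Measure V)) x := hdistribution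
    _ = ∫ x, u x • (𝓕 (hf2.toLp f) : Lp F 2 (volume : Measure V)) x := by simp [hs]

lemma eLpNorm_fourier_le {f : V → F} (hf : Integrable f) :
    eLpNorm (𝓕 f) 2 volume ≤ eLpNorm f 2 volume := by
  by_cases htop : eLpNorm f 2 volume = ⊤
  · exact htop ▸ le_top
  have hf2 : MemLp f 2 volume := ⟨hf.1, lt_top_iff_ne_top.2 htop⟩
  rw [eLpNorm_congr_ae (fourier_ae_eq_fourier_toLp hf hf2), ← eLpNorm_congr_ae hf2.coeFn_toLp,
    ← Lp.enorm_def, ← Lp.enorm_def, ← ofReal_norm, ← ofReal_norm, Lp.norm_fourier_eq]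

end Plancherel

lemma map_mul_left_restrict_Ioi {c : ℝ} (hc : 0 < c) :
    Measure.map (c * ·) (volume.restrict (Ioi 0)) =
      ENNReal.ofReal c⁻¹ • volume.restrict (Ioi (0 : ℝ)) := by
  have hpre : (c * ·) ⁻¹' Ioi 0 = Ioi (0 : ℝ) := by
    ext x
    exact mul_pos_iff_of_pos_left hc
  rw [← Measure.restrict_smul, ← abs_of_pos (inv_pos.2 hc), ← Real.map_volume_mul_left hc.ne',
    Measure.restrict_map (by fun_prop) measurableSet_Ioi, hpre]

lemma lintegral_Ioi_comp_mul_left (g : ℝ → ENNReal) {c : ℝ} (hc : 0 < c) :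
    ∫⁻ x in Ioi 0, g (c * x) = ENNReal.ofReal c⁻¹ * ∫⁻ x in Ioi 0, g x := by
  rw [← smul_eq_mul, ← lintegral_smul_measure, ← map_mul_left_restrict_Ioi hc]
  exact ((measurableEmbedding_mulLeft₀ hc.ne').lintegral_map g).symm

lemma eLpNorm_comp_mul_left {E : Type*} [NormedAddCommGroup E] (g : ℝ → E) {c : ℝ} (hc : c ≠ 0)
    (p : ENNReal) :
    eLpNorm (fun x => g (c * x)) p volume =
      ENNReal.ofReal |c⁻¹| ^ (1 / p).toReal * eLpNorm g p volume := by
  have hc' : ENNReal.ofReal |c⁻¹| ≠ 0 := by simpa using hc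
  rw [← smul_eq_mul, ← eLpNorm_smul_measure_of_ne_zero hc', ← Real.map_volume_mul_left hc]
  exact ((measurableEmbedding_mulLeft₀ hc).eLpNorm_map_measure).symm

/-- The half-line Fourier transform `∫₀^∞ e^{iσxy} f y dy`, used with `σ = 1` and `σ = -1`. -/
noncomputable def halfLineFourier (σ : ℝ) (f : ℝ → ℂ) (x : ℝ) : ℂ :=
  ∫ y in Ioi 0, Complex.exp (Complex.I * (σ * (x * y) : ℝ)) * f y

lemma halfLineFourier_eq_fourier (σ : ℝ) (f : ℝ → ℂ) (x : ℝ) :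
    halfLineFourier σ f x =
      FourierTransform.fourier ((Ioi 0).indicator f) (-(σ / (2 * Real.pi)) * x) := by
  rw [halfLineFourier, Real.fourier_real_eq_integral_exp_smul,
    ← integral_indicator measurableSet_Ioi]
  refine integral_congr_ae (ae_of_all _ fun y => ?_)
  simp only [indicator_apply, smul_eq_mul, mul_ite, mul_zero]
  congr 3
  have : (Real.pi : ℂ) ≠ 0 := Complex.ofReal_ne_zero.2 Real.pi_ne_zero
  push_cast
  field_simp

lemma eLpNorm_halfLineFourier_le {σ : ℝ} (hσ : σ ≠ 0) {f : ℝ → ℂ} (hf : IntegrableOn f (Ioi 0)) :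
    eLpNorm (halfLineFourier σ f) 2 (volume.restrict (Ioi 0)) ≤
      ENNReal.ofReal (2 * Real.pi / |σ|) ^ (1 / 2 : ℝ) *
        eLpNorm f 2 (volume.restrict (Ioi 0)) := by
  set F := (Ioi 0).indicator f
  have hF : Integrable F := (integrable_indicator_iff measurableSet_Ioi).2 hf
  have hc : -(σ / (2 * Real.pi)) ≠ 0 := neg_ne_zero.2 (div_ne_zero hσ (by positivity))
  calc eLpNorm (halfLineFourier σ f) 2 (volume.restrict (Ioi 0))
      ≤ eLpNorm (fun x => FourierTransform.fourier F (-(σ / (2 * Real.pi)) * x)) 2 volume := by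
        rw [funext (halfLineFourier_eq_fourier σ f)]
        exact eLpNorm_restrict_le _ _ _ _
    _ = ENNReal.ofReal (2 * Real.pi / |σ|) ^ (1 / 2 : ℝ) *
          eLpNorm (FourierTransform.fourier F) 2 volume := by
        rw [eLpNorm_comp_mul_left _ hc, abs_inv, abs_neg, abs_div, inv_div,
          abs_of_pos Real.two_pi_pos]
        simp
    _ ≤ ENNReal.ofReal (2 * Real.pi / |σ|) ^ (1 / 2 : ℝ) *
          eLpNorm f 2 (volume.restrict (Ioi 0)) := by
        rw [← eLpNorm_indicator_eq_eLpNorm_restrict measurableSet_Ioi]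
        gcongr
        exact eLpNorm_fourier_le hF

lemma integrableOn_exp_mul {f : ℝ → ℂ} (hf : IntegrableOn f (Ioi 0)) (σ x : ℝ) :
    IntegrableOn (fun y => Complex.exp (Complex.I * (σ * (x * y) : ℝ)) * f y) (Ioi 0) :=
  hf.bdd_mul (c := 1) (Continuous.aestronglyMeasurable (by fun_prop))
    (ae_of_all _ fun y => by simp [Complex.norm_exp])

lemma aestronglyMeasurable_halfLineFourier {f : ℝ → ℂ}
    (hf : AEStronglyMeasurable f (volume.restrict (Ioi 0))) (σ : ℝ) :
    AEStronglyMeasurable (halfLineFourier σ f) (volume.restrict (Ioi 0)) := by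
  have hjoint : AEStronglyMeasurable
      (fun p : ℝ × ℝ => Complex.exp (Complex.I * (σ * (p.1 * p.2) : ℝ)) * f p.2)
      ((volume.restrict (Ioi 0)).prod (volume.restrict (Ioi 0))) :=
    (Continuous.aestronglyMeasurable (by fun_prop)).mul hf.comp_snd
  exact hjoint.integral_prod_right'

lemma sq_lintegral_mul_le {Y : Type*} [MeasurableSpace Y] {ν : Measure Y} {k f q : Y → ENNReal}
    (hk : AEMeasurable k ν) (hf : AEMeasurable f ν) (hq : AEMeasurable q ν)
    (hq0 : ∀ᵐ y ∂ν, q y ≠ 0 ∧ q y ≠ ⊤) :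
    (∫⁻ y, k y * f y ∂ν) ^ 2 ≤
      (∫⁻ y, k y * q y ∂ν) * ∫⁻ y, k y * (f y ^ 2 * (q y)⁻¹) ∂ν := by
  have hsqrt (u : ENNReal) : (u ^ (1 / 2 : ℝ)) ^ (2 : ℝ) = u := by
    rw [← ENNReal.rpow_mul]
    norm_num
  have hfactor : ∀ᵐ y ∂ν, k y * f y =
      (k y * q y) ^ (1 / 2 : ℝ) * (k y * (f y ^ 2 * (q y)⁻¹)) ^ (1 / 2 : ℝ) := by
    filter_upwards [hq0] with y hy
    rw [← ENNReal.mul_rpow_of_nonneg _ _ (by norm_num),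
      show k y * q y * (k y * (f y ^ 2 * (q y)⁻¹)) = q y * (q y)⁻¹ * (k y * f y) ^ 2 by ring,
      ENNReal.mul_inv_cancel hy.1 hy.2, one_mul, ← ENNReal.rpow_natCast, ← ENNReal.rpow_mul]
    norm_num
  have hholder := ENNReal.lintegral_mul_le_Lp_mul_Lq ν Real.HolderConjugate.two_two
    (f := fun y => (k y * q y) ^ (1 / 2 : ℝ))
    (g := fun y => (k y * (f y ^ 2 * (q y)⁻¹)) ^ (1 / 2 : ℝ)) (by fun_prop) (by fun_prop)
  simp only [hsqrt, Pi.mul_apply] at hholder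
  rw [← ENNReal.mul_rpow_of_nonneg _ _ (by norm_num), ← lintegral_congr_ae hfactor] at hholder
  calc (∫⁻ y, k y * f y ∂ν) ^ 2
      ≤ (((∫⁻ y, k y * q y ∂ν) * ∫⁻ y, k y * (f y ^ 2 * (q y)⁻¹) ∂ν) ^ (1 / 2 : ℝ)) ^ 2 := by
        gcongr
    _ = (∫⁻ y, k y * q y ∂ν) * ∫⁻ y, k y * (f y ^ 2 * (q y)⁻¹) ∂ν := by
        rw [← ENNReal.rpow_two, hsqrt]

lemma lintegral_sq_lintegral_mul_le_of_schur {X Y : Type*} [MeasurableSpace X] [MeasurableSpace Y]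
    {μ : Measure X} {ν : Measure Y} [SFinite μ] [SFinite ν] {k : X → Y → ENNReal}
    {p : X → ENNReal} {q f : Y → ENNReal} {A B : ENNReal}
    (hk : Measurable (Function.uncurry k)) (hp : Measurable p) (hq : Measurable q)
    (hf : AEMeasurable f ν) (hq0 : ∀ᵐ y ∂ν, q y ≠ 0 ∧ q y ≠ ⊤)
    (hrow : ∀ᵐ x ∂μ, ∫⁻ y, k x y * q y ∂ν ≤ A * p x)
    (hcol : ∀ᵐ y ∂ν, ∫⁻ x, k x y * p x ∂μ ≤ B * q y) :
    ∫⁻ x, (∫⁻ y, k x y * f y ∂ν) ^ 2 ∂μ ≤ A * B * ∫⁻ y, f y ^ 2 ∂ν := by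
  have hksnd (x : X) : Measurable (k x) := hk.of_uncurry_left
  have hkfst (y : Y) : Measurable fun x => k x y := hk.of_uncurry_right
  calc ∫⁻ x, (∫⁻ y, k x y * f y ∂ν) ^ 2 ∂μ
      ≤ ∫⁻ x, A * p x * ∫⁻ y, k x y * (f y ^ 2 * (q y)⁻¹) ∂ν ∂μ := by
        refine lintegral_mono_ae (hrow.mono fun x hx => ?_)
        refine (sq_lintegral_mul_le (hksnd x).aemeasurable hf hq.aemeasurable hq0).trans ?_
        gcongr
    _ = ∫⁻ x, ∫⁻ y, A * p x * (k x y * (f y ^ 2 * (q y)⁻¹)) ∂ν ∂μ :=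
        lintegral_congr fun x => (lintegral_const_mul'' _ (by fun_prop)).symm
    _ = ∫⁻ y, ∫⁻ x, A * p x * (k x y * (f y ^ 2 * (q y)⁻¹)) ∂μ ∂ν := by
        have hfsnd : AEMeasurable (fun z : X × Y => f z.2) (μ.prod ν) := hf.comp_snd
        exact lintegral_lintegral_swap (((hp.comp measurable_fst).const_mul A).aemeasurable.mul
          (hk.aemeasurable.mul ((hfsnd.pow_const 2).mul (hq.comp measurable_snd).inv.aemeasurable)))
    _ = ∫⁻ y, A * (f y ^ 2 * (q y)⁻¹) * ∫⁻ x, k x y * p x ∂μ ∂ν := by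
        refine lintegral_congr fun y => ?_
        rw [← lintegral_const_mul _ (by fun_prop)]
        exact lintegral_congr fun x => by ring
    _ ≤ ∫⁻ y, A * B * f y ^ 2 ∂ν := by
        refine lintegral_mono_ae ?_
        filter_upwards [hcol, hq0] with y hy hy0
        calc A * (f y ^ 2 * (q y)⁻¹) * ∫⁻ x, k x y * p x ∂μ
            ≤ A * (f y ^ 2 * (q y)⁻¹) * (B * q y) := by gcongr
          _ = A * B * f y ^ 2 * (q y * (q y)⁻¹) := by ring
          _ = A * B * f y ^ 2 := by rw [ENNReal.mul_inv_cancel hy0.1 hy0.2, mul_one]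
    _ = A * B * ∫⁻ y, f y ^ 2 ∂ν := lintegral_const_mul'' _ (by fun_prop)

lemma lintegral_Ioi_comp_mul_mul_rpow {k : ℝ → ENNReal} (hk : Measurable k) {x : ℝ} (hx : 0 < x) :
    ∫⁻ y in Ioi 0, k (x * y) * ENNReal.ofReal (y ^ (-(1 / 2) : ℝ)) =
      (∫⁻ z in Ioi 0, k z * ENNReal.ofReal (z ^ (-(1 / 2) : ℝ))) *
        ENNReal.ofReal (x ^ (-(1 / 2) : ℝ)) := by
  have hxy : ∀ y ∈ Ioi (0 : ℝ), k (x * y) * ENNReal.ofReal (y ^ (-(1 / 2) : ℝ)) =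
      ENNReal.ofReal (x ^ (1 / 2 : ℝ)) *
        (k (x * y) * ENNReal.ofReal ((x * y) ^ (-(1 / 2) : ℝ))) := fun y hy => by
    rw [mul_left_comm, ← ENNReal.ofReal_mul (by positivity), Real.mul_rpow hx.le (le_of_lt hy),
      ← mul_assoc (x ^ (1 / 2 : ℝ)), ← Real.rpow_add hx, add_neg_cancel, Real.rpow_zero, one_mul]
  have hpow : x ^ (1 / 2 : ℝ) * x⁻¹ = x ^ (-(1 / 2) : ℝ) := by
    rw [← Real.rpow_neg_one, ← Real.rpow_add hx]
    norm_num
  rw [setLIntegral_congr_fun measurableSet_Ioi hxy, lintegral_const_mul _ (by fun_prop),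
    lintegral_Ioi_comp_mul_left (fun z => k z * ENNReal.ofReal (z ^ (-(1 / 2) : ℝ))) hx,
    ← mul_assoc, ← ENNReal.ofReal_mul (by positivity), hpow, mul_comm]

lemma eLpNorm_lintegral_comp_mul_le {k f : ℝ → ENNReal} (hk : Measurable k)
    (hf : AEMeasurable f (volume.restrict (Ioi 0))) :
    eLpNorm (fun x => ∫⁻ y in Ioi 0, k (x * y) * f y) 2 (volume.restrict (Ioi 0)) ≤
      (∫⁻ z in Ioi 0, k z * ENNReal.ofReal (z ^ (-(1 / 2) : ℝ))) *
        eLpNorm f 2 (volume.restrict (Ioi 0)) := by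
  rw [← ENNReal.pow_le_pow_left_iff two_ne_zero, mul_pow, eLpNorm_two_sq, eLpNorm_two_sq,
    sq (∫⁻ z in Ioi 0, _)]
  have hrow : ∀ᵐ x ∂volume.restrict (Ioi (0 : ℝ)),
      ∫⁻ y in Ioi 0, k (x * y) * ENNReal.ofReal (y ^ (-(1 / 2) : ℝ)) ≤
        (∫⁻ z in Ioi 0, k z * ENNReal.ofReal (z ^ (-(1 / 2) : ℝ))) *
          ENNReal.ofReal (x ^ (-(1 / 2) : ℝ)) := by
    filter_upwards [ae_restrict_mem measurableSet_Ioi] with x hx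
    exact (lintegral_Ioi_comp_mul_mul_rpow hk hx).le
  refine lintegral_sq_lintegral_mul_le_of_schur (k := fun x y => k (x * y)) (by fun_prop)
    (by fun_prop)
    (by fun_prop) hf ?_ hrow (by simpa only [mul_comm] using hrow)
  filter_upwards [ae_restrict_mem measurableSet_Ioi] with y hy
  exact ⟨ENNReal.ofReal_ne_zero_iff.2 (Real.rpow_pos_of_pos hy _), ENNReal.ofReal_ne_top⟩

/-- The Hankel transform of order `ν`, normalised so that it acts on `L²((0, ∞), dx)`. -/
noncomputable def hankelTransform (ν : ℝ) (f : ℝ → ℂ) (x : ℝ) : ℂ :=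
  ∫ y in Ioi 0, (sqrtBessel ν (x * y) : ℂ) * f y

lemma enorm_integral_le_add_lintegral_enorm_sub {X E : Type*} [MeasurableSpace X]
    [NormedAddCommGroup E] [NormedSpace ℝ E] {μ : Measure X} (u : X → E) {v : X → E}
    (hv : Integrable v μ) :
    ‖∫ x, u x ∂μ‖ₑ ≤ ‖∫ x, v x ∂μ‖ₑ + ∫⁻ x, ‖u x - v x‖ₑ ∂μ := by
  by_cases hu : Integrable u μ
  · calc ‖∫ x, u x ∂μ‖ₑ = ‖∫ x, v x ∂μ + ∫ x, (u x - v x) ∂μ‖ₑ := by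
          rw [integral_sub hu hv, add_sub_cancel]
      _ ≤ ‖∫ x, v x ∂μ‖ₑ + ∫⁻ x, ‖u x - v x‖ₑ ∂μ :=
          (enorm_add_le _ _).trans (by gcongr; exact enorm_integral_le_lintegral_enorm _)
  · simp [integral_undef hu]

lemma re_mul_exp_I_mul_eq (A : ℂ) (z : ℝ) :
    ((A * Complex.exp (Complex.I * z)).re : ℂ) =
      A / 2 * Complex.exp (Complex.I * (1 * z : ℝ)) +
        starRingEnd ℂ A / 2 * Complex.exp (Complex.I * (-1 * z : ℝ)) := by
  rw [Complex.re_eq_add_conj, map_mul, ← Complex.exp_conj, map_mul, Complex.conj_I,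
    Complex.conj_ofReal]
  push_cast
  ring_nf

lemma integrableOn_re_mul_exp_I_mul {f : ℝ → ℂ} (hf : IntegrableOn f (Ioi 0)) (A : ℂ) (x : ℝ) :
    IntegrableOn (fun y => ((A * Complex.exp (Complex.I * (x * y : ℝ))).re : ℂ) * f y) (Ioi 0) := by
  simp only [re_mul_exp_I_mul_eq, add_mul, mul_assoc]
  exact ((integrableOn_exp_mul hf 1 x).const_mul _).add
    ((integrableOn_exp_mul hf (-1) x).const_mul _)

lemma integral_re_mul_exp_I_mul {f : ℝ → ℂ} (hf : IntegrableOn f (Ioi 0)) (A : ℂ) (x : ℝ) :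
    ∫ y in Ioi 0, ((A * Complex.exp (Complex.I * (x * y : ℝ))).re : ℂ) * f y =
      A / 2 * halfLineFourier 1 f x + starRingEnd ℂ A / 2 * halfLineFourier (-1) f x := by
  simp only [re_mul_exp_I_mul_eq, add_mul, mul_assoc]
  rw [integral_add ((integrableOn_exp_mul hf 1 x).const_mul _)
    ((integrableOn_exp_mul hf (-1) x).const_mul _), integral_const_mul, integral_const_mul,
    halfLineFourier, halfLineFourier]

lemma enorm_hankelTransform_le {f : ℝ → ℂ} (hf : IntegrableOn f (Ioi 0)) (ν : ℝ) (A : ℂ) (x : ℝ) :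
    ‖hankelTransform ν f x‖ₑ ≤
      ‖A / 2 * halfLineFourier 1 f x + starRingEnd ℂ A / 2 * halfLineFourier (-1) f x‖ₑ +
        ∫⁻ y in Ioi 0, ‖sqrtBessel ν (x * y) -
          (A * Complex.exp (Complex.I * (x * y : ℝ))).re‖ₑ * ‖f y‖ₑ := by
  rw [← integral_re_mul_exp_I_mul hf]
  have henorm (s : ℝ) : ‖(s : ℂ)‖ₑ = ‖s‖ₑ := congrArg _ (Complex.nnnorm_real s)
  refine (enorm_integral_le_add_lintegral_enorm_sub _
    (integrableOn_re_mul_exp_I_mul hf A x)).trans_eq ?_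
  simp only [← sub_mul, enorm_mul, ← Complex.ofReal_sub, henorm]

lemma measurable_sqrtBessel (ν : ℝ) : Measurable (sqrtBessel ν) :=
  (measurable_id.pow_const _).mul (continuous_besselEntire ν).measurable

lemma eLpNorm_const_mul_halfLineFourier_le {f : ℝ → ℂ} (hf : IntegrableOn f (Ioi 0)) (c : ℂ)
    {σ : ℝ} (hσ : |σ| = 1) :
    eLpNorm (fun x => c * halfLineFourier σ f x) 2 (volume.restrict (Ioi 0)) ≤
      ‖c‖ₑ * ENNReal.ofReal (2 * Real.pi) ^ (1 / 2 : ℝ) *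
        eLpNorm f 2 (volume.restrict (Ioi 0)) := by
  have hσ0 : σ ≠ 0 := abs_pos.1 (hσ ▸ one_pos)
  have hle := eLpNorm_halfLineFourier_le hσ0 hf
  rw [hσ, div_one] at hle
  refine (eLpNorm_const_smul_le (c := c)).trans ?_
  rw [mul_assoc]
  gcongr

/-- The leading term of the asymptotics is a combination of two Fourier transforms, and
the remainder is integrable against `z ^ (-1/2)`, so Schur's test applies to it. -/
lemma exists_eLpNorm_hankelTransform_le {ν : ℝ} (hν : -1 < ν) :
    ∃ C : ENNReal, C ≠ ⊤ ∧ ∀ f : ℝ → ℂ, IntegrableOn f (Ioi 0) →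
      eLpNorm (hankelTransform ν f) 2 (volume.restrict (Ioi 0)) ≤
        C * eLpNorm f 2 (volume.restrict (Ioi 0)) := by
  obtain ⟨A, hA⟩ := exists_integrableOn_sqrtBessel_sub_re_mul_rpow hν
  set k : ℝ → ENNReal := fun z => ‖sqrtBessel ν z - (A * Complex.exp (Complex.I * z)).re‖ₑ
  have hk : Measurable k := ((measurable_sqrtBessel ν).sub (by fun_prop)).enorm
  set B := ∫⁻ z in Ioi 0, k z * ENNReal.ofReal (z ^ (-(1 / 2) : ℝ))
  set P := ENNReal.ofReal (2 * Real.pi) ^ (1 / 2 : ℝ)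
  have hB : B ≠ ⊤ := by
    refine ne_of_eq_of_ne (setLIntegral_congr_fun measurableSet_Ioi fun z hz => ?_) hA.2.ne
    simp only [enorm_mul, k, Real.enorm_of_nonneg (Real.rpow_nonneg (le_of_lt hz) _)]
  refine ⟨‖A / 2‖ₑ * P + ‖starRingEnd ℂ A / 2‖ₑ * P + B, by finiteness, fun f hf => ?_⟩
  have hmeas (c : ℂ) (σ : ℝ) : AEStronglyMeasurable (fun x => c * halfLineFourier σ f x)
      (volume.restrict (Ioi 0)) :=
    (aestronglyMeasurable_halfLineFourier hf.1 σ).const_mul c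
  have hremainder := eLpNorm_lintegral_comp_mul_le hk hf.1.enorm
  rw [eLpNorm_enorm] at hremainder
  have hmeask : AEStronglyMeasurable (fun x => ∫⁻ y in Ioi 0, k (x * y) * ‖f y‖ₑ)
      (volume.restrict (Ioi 0)) :=
    ((hk.comp measurable_mul).aemeasurable.mul
      hf.1.enorm.comp_snd).lintegral_prod_right'.aestronglyMeasurable
  calc eLpNorm (hankelTransform ν f) 2 (volume.restrict (Ioi 0))
      ≤ eLpNorm ((fun x => ‖A / 2 * halfLineFourier 1 f x +
          starRingEnd ℂ A / 2 * halfLineFourier (-1) f x‖ₑ) +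
            fun x => ∫⁻ y in Ioi 0, k (x * y) * ‖f y‖ₑ) 2 (volume.restrict (Ioi 0)) :=
        eLpNorm_mono_enorm fun x => enorm_hankelTransform_le hf ν A x
    _ ≤ _ := by
        refine (eLpNorm_add_le ((hmeas _ 1).add (hmeas _ (-1))).enorm.aestronglyMeasurable
          hmeask one_le_two).trans ?_
        rw [eLpNorm_enorm, add_mul, add_mul]
        gcongr
        exact (eLpNorm_add_le (hmeas _ 1) (hmeas _ (-1)) one_le_two).trans
          (add_le_add (eLpNorm_const_mul_halfLineFourier_le hf _ (by simp))
            (eLpNorm_const_mul_halfLineFourier_le hf _ (by simp)))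

/-! ### Interpolation between `L¹ → L^∞` and `L² → L²` -/

section Interpolation

variable {X Y E F : Type*} [MeasurableSpace X] [MeasurableSpace Y] {μ : Measure X} {ν : Measure Y}
  [NormedAddCommGroup E] [NormedAddCommGroup F]

lemma eLpNorm_ofReal_rpow (f : X → E) {p : ℝ} (hp : 0 < p) :
    eLpNorm f (ENNReal.ofReal p) μ ^ p = ∫⁻ x, ‖f x‖ₑ ^ p ∂μ := by
  have h := eLpNorm_nnreal_pow_eq_lintegral (f := f) (μ := μ) (Real.toNNReal_pos.2 hp).ne'
  rwa [Real.coe_toNNReal _ hp.le] at h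

lemma eLpNorm_indicator_eq_eLpNorm_restrict_of_nullMeasurableSet {s : Set X}
    (hs : NullMeasurableSet s μ) (f : X → E) (p : ENNReal) :
    eLpNorm (s.indicator f) p μ = eLpNorm f p (μ.restrict s) := by
  obtain ⟨t, ht, hst⟩ := hs
  rw [eLpNorm_congr_ae (indicator_ae_eq_of_ae_eq_set hst), Measure.restrict_congr_set hst,
    eLpNorm_indicator_eq_eLpNorm_restrict ht]

lemma pow_mul_measure_lt_le {h h₁ h₂ : Y → ENNReal} {l : ENNReal} (p : ℕ)
    (h₂_meas : AEMeasurable h₂ ν) (hle : ∀ᵐ y ∂ν, h y ≤ h₁ y + h₂ y)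
    (hle_half : ∀ᵐ y ∂ν, h₁ y ≤ l / 2) :
    (l / 2) ^ p * ν {y | l < h y} ≤ ∫⁻ y, h₂ y ^ p ∂ν := by
  refine (mul_le_mul_right (measure_mono_ae ?_) _).trans
    (mul_meas_ge_le_lintegral₀ (h₂_meas.pow_const p) ((l / 2) ^ p))
  filter_upwards [hle, hle_half] with y hy hy₁ (hly : l < h y)
  refine pow_le_pow_left' (le_of_not_gt fun hlt => hly.not_ge ?_) p
  calc h y ≤ l / 2 + l / 2 := hy.trans (add_le_add hy₁ hlt.le)
    _ = l := ENNReal.add_halves l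

lemma setLIntegral_Ioc_rpow_sub_one {Λ s : ℝ} (hΛ : 0 ≤ Λ) (hs : 0 < s) :
    ∫⁻ l in Ioc 0 Λ, ENNReal.ofReal (l ^ (s - 1)) = ENNReal.ofReal (Λ ^ s / s) := by
  have hint : IntegrableOn (fun l : ℝ => l ^ (s - 1)) (Ioc 0 Λ) :=
    (intervalIntegrable_iff_integrableOn_Ioc_of_le hΛ).1
      (intervalIntegral.intervalIntegrable_rpow' (by linarith))
  rw [← ofReal_integral_eq_lintegral_ofReal hint ((ae_restrict_iff' measurableSet_Ioc).2
      (ae_of_all _ fun l hl => Real.rpow_nonneg hl.1.le _)),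
    ← intervalIntegral.integral_of_le hΛ, integral_rpow (.inl (by linarith)), sub_add_cancel,
    Real.zero_rpow hs.ne', sub_zero]

/-- Layer cake on the left, Tonelli on the right. -/
lemma lintegral_rpow_le_of_rpow_mul_measure_lt_le [SFinite μ] {h : Y → ℝ} {Λ : X → ℝ}
    {G : X → ENNReal} {p r : ℝ} (hr : 0 < r) (hpr : p < r) (hh0 : 0 ≤ᵐ[ν] h)
    (hh : AEMeasurable h ν) (hΛ0 : ∀ x, 0 ≤ Λ x) (hΛ : AEMeasurable Λ μ) (hG : AEMeasurable G μ)
    (hweak : ∀ l > 0, ENNReal.ofReal (l ^ p) * ν {y | l < h y} ≤ ∫⁻ x in {x | l ≤ Λ x}, G x ∂μ) :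
    ∫⁻ y, ENNReal.ofReal (h y ^ r) ∂ν ≤
      ENNReal.ofReal r * ∫⁻ x, ENNReal.ofReal (Λ x ^ (r - p) / (r - p)) * G x ∂μ := by
  set w : ℝ → ENNReal := fun l => ENNReal.ofReal (l ^ (r - p - 1))
  set J : ℝ → X → ENNReal := fun l x => {x | l ≤ Λ x}.indicator (fun x => w l * G x) x
  have hJ : AEMeasurable (Function.uncurry J) ((volume.restrict (Ioi 0)).prod μ) :=
    AEMeasurable.indicator₀ (s := {q : ℝ × X | q.1 ≤ Λ q.2})
      ((Measurable.aemeasurable (by fun_prop : Measurable fun q : ℝ × X => w q.1)).mul hG.comp_snd)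
      (nullMeasurableSet_le measurable_fst.aemeasurable hΛ.comp_snd)
  have hlayer : ∀ l ∈ Ioi (0 : ℝ), ν {y | l < h y} * ENNReal.ofReal (l ^ (r - 1)) ≤
      ∫⁻ x, J l x ∂μ := fun l (hl : 0 < l) => by
    rw [lintegral_indicator₀ (nullMeasurableSet_le aemeasurable_const hΛ),
      lintegral_const_mul'' _ hG.restrict, show r - 1 = r - p - 1 + p by ring, Real.rpow_add hl,
      ENNReal.ofReal_mul (by positivity), mul_comm, mul_assoc]
    exact mul_le_mul_right (hweak l hl) _
  have hinner (x : X) : ∫⁻ l in Ioi 0, J l x =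
      ENNReal.ofReal (Λ x ^ (r - p) / (r - p)) * G x := by
    change ∫⁻ l in Ioi 0, (Iic (Λ x)).indicator (fun l => w l * G x) l = _
    rw [lintegral_indicator measurableSet_Iic, Measure.restrict_restrict measurableSet_Iic,
      inter_comm, Ioi_inter_Iic,
      lintegral_mul_const _ (by fun_prop), setLIntegral_Ioc_rpow_sub_one (hΛ0 x) (sub_pos.2 hpr)]
  calc ∫⁻ y, ENNReal.ofReal (h y ^ r) ∂ν
      = ENNReal.ofReal r * ∫⁻ l in Ioi 0, ν {y | l < h y} * ENNReal.ofReal (l ^ (r - 1)) :=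
        lintegral_rpow_eq_lintegral_meas_lt_mul ν hh0 hh hr
    _ ≤ ENNReal.ofReal r * ∫⁻ l in Ioi 0, ∫⁻ x, J l x ∂μ :=
        mul_le_mul_right (setLIntegral_mono' measurableSet_Ioi hlayer) _
    _ = ENNReal.ofReal r * ∫⁻ x, ENNReal.ofReal (Λ x ^ (r - p) / (r - p)) * G x ∂μ := by
        rw [lintegral_lintegral_swap hJ]
        simp only [hinner]

lemma mul_le_mul_rpow_of_mul_rpow_one_sub_le {c g l q : ℝ} (hg : 0 ≤ g) (hq : 0 < q)
    (h : c * g ^ (1 - q) ≤ l) : c * g ≤ l * g ^ q := by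
  rcases hg.eq_or_lt with rfl | hpos
  · simp [Real.zero_rpow hq.ne']
  · calc c * g = c * g ^ (1 - q) * g ^ q := by
          rw [mul_assoc c, ← Real.rpow_add hpos, sub_add_cancel, Real.rpow_one]
      _ ≤ l * g ^ q := by gcongr

/-- At level `l` the function `f` is cut where `2KN‖f‖^(1-q) = l`: the part of `f` above the
cut is then mapped below `l / 2` by an operator of `L¹ → L^∞` norm `K`. -/
lemma mul_setLIntegral_lt_le_half {f : X → E} (hf : AEStronglyMeasurable f μ) {q : ℝ} (hq : 0 < q)
    (hfin : ∫⁻ x, ‖f x‖ₑ ^ q ∂μ ≠ ⊤) (K : NNReal) (l : ℝ) :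
    K * ∫⁻ x in {x | 2 * K * (∫⁻ x, ‖f x‖ₑ ^ q ∂μ).toReal * ‖f x‖ ^ (1 - q) < l}, ‖f x‖ₑ ∂μ ≤
      ENNReal.ofReal l / 2 := by
  set N := ∫⁻ x, ‖f x‖ₑ ^ q ∂μ
  set c := 2 * K * N.toReal
  have hfq : AEMeasurable (fun x => ‖f x‖ₑ ^ q) μ := hf.enorm.pow_const q
  have hc : 0 ≤ c := by positivity
  have hc_eq : ENNReal.ofReal c = 2 * K * N := by
    rw [ENNReal.ofReal_mul (by positivity), ENNReal.ofReal_toReal hfin,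
      ENNReal.ofReal_mul zero_le_two, ENNReal.ofReal_ofNat, ENNReal.ofReal_coe_nnreal]
  rcases eq_or_ne N 0 with hN0 | hN0
  · have hzero : ∀ᵐ x ∂μ, ‖f x‖ₑ = 0 :=
      ((lintegral_eq_zero_iff' hfq).1 hN0).mono fun _ => (ENNReal.rpow_eq_zero_iff_of_pos hq).1
    rw [lintegral_congr_ae (ae_restrict_of_ae hzero), lintegral_zero, mul_zero]
    exact zero_le
  have hpoint : ∀ x ∈ {x | c * ‖f x‖ ^ (1 - q) < l},
      ENNReal.ofReal c * ‖f x‖ₑ ≤ ENNReal.ofReal l * ‖f x‖ₑ ^ q := fun x hx => by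
    rw [← ofReal_norm, ENNReal.ofReal_rpow_of_nonneg (norm_nonneg _) hq.le,
      ← ENNReal.ofReal_mul hc, ← ENNReal.ofReal_mul' (by positivity)]
    exact ENNReal.ofReal_le_ofReal
      (mul_le_mul_rpow_of_mul_rpow_one_sub_le (norm_nonneg _) hq (le_of_lt hx))
  have hmeas : NullMeasurableSet {x | c * ‖f x‖ ^ (1 - q) < l} μ :=
    nullMeasurableSet_lt ((hf.norm.aemeasurable.pow_const _).const_mul c) aemeasurable_const
  set I := ∫⁻ x in {x | c * ‖f x‖ ^ (1 - q) < l}, ‖f x‖ₑ ∂μ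
  have hscaled : N * (2 * (K * I)) ≤ N * ENNReal.ofReal l :=
    calc N * (2 * (K * I)) = ENNReal.ofReal c * I := by rw [hc_eq]; ring
      _ = ∫⁻ x in {x | c * ‖f x‖ ^ (1 - q) < l}, ENNReal.ofReal c * ‖f x‖ₑ ∂μ :=
          (lintegral_const_mul' _ _ ENNReal.ofReal_ne_top).symm
      _ ≤ ∫⁻ x in {x | c * ‖f x‖ ^ (1 - q) < l}, ENNReal.ofReal l * ‖f x‖ₑ ^ q ∂μ :=
          lintegral_mono_ae ((ae_restrict_mem₀ hmeas).mono hpoint)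
      _ ≤ ∫⁻ x, ENNReal.ofReal l * ‖f x‖ₑ ^ q ∂μ := setLIntegral_le_lintegral _ _
      _ = N * ENNReal.ofReal l := by
          rw [lintegral_const_mul' _ _ ENNReal.ofReal_ne_top, mul_comm]
  rw [ENNReal.le_div_iff_mul_le (.inl two_ne_zero) (.inl ENNReal.ofNat_ne_top), mul_comm]
  exact (ENNReal.mul_le_mul_iff_right hN0 hfin).1 hscaled

variable {T : (X → E) → Y → F} {K : NNReal} {B : ENNReal}

lemma lintegral_enorm_apply_indicator_sq_le
    (h₂ : ∀ u, Integrable u μ → eLpNorm (T u) 2 ν ≤ B * eLpNorm u 2 μ)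
    {f : X → E} (hf : Integrable f μ) {s : Set X} (hs : NullMeasurableSet s μ) :
    ∫⁻ y, ‖T (s.indicator f) y‖ₑ ^ 2 ∂ν ≤ B ^ 2 * ∫⁻ x in s, ‖f x‖ₑ ^ 2 ∂μ :=
  calc ∫⁻ y, ‖T (s.indicator f) y‖ₑ ^ 2 ∂ν ≤ (B * eLpNorm (s.indicator f) 2 μ) ^ 2 := by
        rw [← eLpNorm_two_sq]
        exact pow_le_pow_left' (h₂ _ (hf.indicator₀ hs)) 2
    _ = B ^ 2 * ∫⁻ x in s, ‖f x‖ₑ ^ 2 ∂μ := by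
        rw [mul_pow, eLpNorm_indicator_eq_eLpNorm_restrict_of_nullMeasurableSet hs,
          eLpNorm_two_sq]

lemma sq_mul_measure_lt_norm_le
    (hsub : ∀ u v, Integrable u μ → Integrable v μ →
      ∀ᵐ y ∂ν, ‖T (u + v) y‖ₑ ≤ ‖T u y‖ₑ + ‖T v y‖ₑ)
    (hT : ∀ u, Integrable u μ → AEStronglyMeasurable (T u) ν)
    (h₁ : ∀ u, Integrable u μ → eLpNorm (T u) ⊤ ν ≤ K * eLpNorm u 1 μ)
    (h₂ : ∀ u, Integrable u μ → eLpNorm (T u) 2 ν ≤ B * eLpNorm u 2 μ)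
    {f : X → E} (hf : Integrable f μ) {q : ℝ} (hq : 0 < q) (hfin : ∫⁻ x, ‖f x‖ₑ ^ q ∂μ ≠ ⊤)
    {l : ℝ} (hl : 0 < l) :
    ENNReal.ofReal (l ^ 2) * ν {y | l < ‖T f y‖} ≤
      4 * B ^ 2 * ∫⁻ x in {x | l ≤ 2 * K * (∫⁻ x, ‖f x‖ₑ ^ q ∂μ).toReal * ‖f x‖ ^ (1 - q)},
        ‖f x‖ₑ ^ 2 ∂μ := by
  set Λ : X → ℝ := fun x => 2 * K * (∫⁻ x, ‖f x‖ₑ ^ q ∂μ).toReal * ‖f x‖ ^ (1 - q)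
  set s := {x | Λ x < l}
  have hs : NullMeasurableSet s μ := nullMeasurableSet_lt
    ((hf.1.norm.aemeasurable.pow_const _).const_mul _) aemeasurable_const
  have hcompl : sᶜ = {x | l ≤ Λ x} := by
    ext x
    exact not_lt (a := Λ x)
  have hu := hf.indicator₀ hs
  have hv := hf.indicator₀ hs.compl
  have hhigh : ∀ᵐ y ∂ν, ‖T (s.indicator f) y‖ₑ ≤ ENNReal.ofReal l / 2 := by
    filter_upwards [ae_le_eLpNormEssSup (f := T (s.indicator f)) (μ := ν)] with y hy
    rw [← eLpNorm_exponent_top] at hy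
    refine (hy.trans (h₁ _ hu)).trans ?_
    rw [eLpNorm_indicator_eq_eLpNorm_restrict_of_nullMeasurableSet hs,
      eLpNorm_one_eq_lintegral_enorm]
    exact mul_setLIntegral_lt_le_half hf.1 hq hfin K l
  have hsplit := hsub _ _ hu hv
  rw [indicator_self_add_compl] at hsplit
  have hweak := (pow_mul_measure_lt_le 2 (hT _ hv).enorm hsplit hhigh).trans
    (lintegral_enorm_apply_indicator_sq_le h₂ hf hs.compl)
  have hlevel : {y | ENNReal.ofReal l < ‖T f y‖ₑ} = {y | l < ‖T f y‖} := by
    simp only [← ofReal_norm, ENNReal.ofReal_lt_ofReal_iff_of_nonneg hl.le]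
  calc ENNReal.ofReal (l ^ 2) * ν {y | l < ‖T f y‖}
      = 4 * ((ENNReal.ofReal l / 2) ^ 2 * ν {y | l < ‖T f y‖}) := by
        rw [← mul_assoc, ENNReal.ofReal_pow hl.le,
          show (4 : ENNReal) = 2 ^ 2 by norm_num, ← mul_pow,
          ENNReal.mul_div_cancel two_ne_zero ENNReal.ofNat_ne_top]
    _ ≤ 4 * (B ^ 2 * ∫⁻ x in {x | l ≤ Λ x}, ‖f x‖ₑ ^ 2 ∂μ) := by
        rw [← hlevel, ← hcompl]
        gcongr
    _ = 4 * B ^ 2 * ∫⁻ x in {x | l ≤ Λ x}, ‖f x‖ₑ ^ 2 ∂μ := (mul_assoc _ _ _).symm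

lemma rpow_mul_sq_eq {c g r : ℝ} (hc : 0 ≤ c) (hg : 0 ≤ g) (hr : 2 < r) :
    (c * g ^ (1 - r / (r - 1))) ^ (r - 2) * g ^ 2 = c ^ (r - 2) * g ^ (r / (r - 1)) := by
  have hr1 : r - 1 ≠ 0 := by linarith
  rcases hg.eq_or_lt with rfl | hpos
  · have hq : r / (r - 1) ≠ 0 := div_ne_zero (by linarith) hr1
    simp [Real.zero_rpow hq]
  · rw [Real.mul_rpow hc (Real.rpow_nonneg hg _), ← Real.rpow_mul hg, mul_assoc,
      ← Real.rpow_two, ← Real.rpow_add hpos]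
    congr 2
    field_simp
    ring

lemma ofReal_rpow_mul_enorm_sq_eq {c r : ℝ} (hc : 0 ≤ c) (hr : 2 < r) (z : E) :
    ENNReal.ofReal ((c * ‖z‖ ^ (1 - r / (r - 1))) ^ (r - 2)) * ‖z‖ₑ ^ 2 =
      ENNReal.ofReal c ^ (r - 2) * ‖z‖ₑ ^ (r / (r - 1)) := by
  have hq : 0 ≤ r / (r - 1) := div_nonneg (by linarith) (by linarith)
  rw [← ofReal_norm, ← ENNReal.ofReal_pow (norm_nonneg z), ← ENNReal.ofReal_mul (by positivity),
    rpow_mul_sq_eq hc (norm_nonneg z) hr, ENNReal.ofReal_mul (by positivity),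
    ENNReal.ofReal_rpow_of_nonneg hc (by linarith),
    ENNReal.ofReal_rpow_of_nonneg (norm_nonneg z) hq]

lemma lintegral_rpow_enorm_le_of_eLpNorm_top_le_of_eLpNorm_two_le [SFinite μ]
    (hsub : ∀ u v, Integrable u μ → Integrable v μ →
      ∀ᵐ y ∂ν, ‖T (u + v) y‖ₑ ≤ ‖T u y‖ₑ + ‖T v y‖ₑ)
    (hT : ∀ u, Integrable u μ → AEStronglyMeasurable (T u) ν)
    (h₁ : ∀ u, Integrable u μ → eLpNorm (T u) ⊤ ν ≤ K * eLpNorm u 1 μ)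
    (h₂ : ∀ u, Integrable u μ → eLpNorm (T u) 2 ν ≤ B * eLpNorm u 2 μ)
    {r : ℝ} (hr : 2 < r) {f : X → E} (hf : Integrable f μ)
    (hfin : ∫⁻ x, ‖f x‖ₑ ^ (r / (r - 1)) ∂μ ≠ ⊤) :
    ∫⁻ y, ‖T f y‖ₑ ^ r ∂ν ≤ ENNReal.ofReal (4 * r / (r - 2)) * B ^ 2 * (2 * K) ^ (r - 2) *
      (∫⁻ x, ‖f x‖ₑ ^ (r / (r - 1)) ∂μ) ^ (r - 1) := by
  set q := r / (r - 1)
  set N := ∫⁻ x, ‖f x‖ₑ ^ q ∂μ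
  set c := 2 * K * N.toReal
  have hr0 : 0 < r := by linarith
  have hr2 : 0 < r - 2 := by linarith
  have hq : 0 < q := div_pos hr0 (by linarith)
  have hc : 0 ≤ c := by positivity
  have hc_eq : ENNReal.ofReal c = 2 * K * N := by
    rw [ENNReal.ofReal_mul (by positivity), ENNReal.ofReal_toReal hfin,
      ENNReal.ofReal_mul zero_le_two, ENNReal.ofReal_ofNat, ENNReal.ofReal_coe_nnreal]
  have hpoint (x : X) : ENNReal.ofReal ((c * ‖f x‖ ^ (1 - q)) ^ (r - 2) / (r - 2)) *
      (4 * B ^ 2 * ‖f x‖ₑ ^ 2) =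
        4 * ENNReal.ofReal (r - 2)⁻¹ * B ^ 2 * (2 * K * N) ^ (r - 2) * ‖f x‖ₑ ^ q := by
    rw [div_eq_mul_inv, ENNReal.ofReal_mul' (inv_nonneg.2 hr2.le), ← hc_eq, mul_assoc (4 * _ * _),
      ← ofReal_rpow_mul_enorm_sq_eq hc hr]
    ring
  have hcake := lintegral_rpow_le_of_rpow_mul_measure_lt_le (h := fun y => ‖T f y‖) hr0 hr
    (ae_of_all _ fun y => norm_nonneg _) (hT f hf).norm.aemeasurable
    (fun x => mul_nonneg hc (Real.rpow_nonneg (norm_nonneg (f x)) _))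
    ((hf.1.norm.aemeasurable.pow_const (1 - q)).const_mul c)
    ((hf.1.enorm.pow_const 2).const_mul (4 * B ^ 2)) fun l hl => by
      rw [Real.rpow_two, lintegral_const_mul'' _ (hf.1.enorm.pow_const 2).restrict]
      exact sq_mul_measure_lt_norm_le hsub hT h₁ h₂ hf hq hfin hl
  simp only [hpoint] at hcake
  rw [lintegral_const_mul'' _ (hf.1.enorm.pow_const q),
    ENNReal.mul_rpow_of_nonneg _ _ hr2.le] at hcake
  simp only [← ofReal_norm (T f _), ENNReal.ofReal_rpow_of_nonneg (norm_nonneg _) hr0.le]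
  refine hcake.trans_eq ?_
  rw [show r - 1 = r - 2 + 1 by ring, ENNReal.rpow_add_of_nonneg _ _ hr2.le zero_le_one,
    ENNReal.rpow_one, div_eq_mul_inv, ENNReal.ofReal_mul (by positivity),
    ENNReal.ofReal_mul zero_le_four, ENNReal.ofReal_ofNat]
  ring

theorem eLpNorm_le_of_eLpNorm_top_le_of_eLpNorm_two_le [SFinite μ]
    (hsub : ∀ u v, Integrable u μ → Integrable v μ →
      ∀ᵐ y ∂ν, ‖T (u + v) y‖ₑ ≤ ‖T u y‖ₑ + ‖T v y‖ₑ)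
    (hT : ∀ u, Integrable u μ → AEStronglyMeasurable (T u) ν)
    (h₁ : ∀ u, Integrable u μ → eLpNorm (T u) ⊤ ν ≤ K * eLpNorm u 1 μ)
    (h₂ : ∀ u, Integrable u μ → eLpNorm (T u) 2 ν ≤ B * eLpNorm u 2 μ)
    {r : ℝ} (hr : 2 < r) {f : X → E} (hf : Integrable f μ)
    (hfin : eLpNorm f (ENNReal.ofReal (r / (r - 1))) μ ≠ ⊤) :
    eLpNorm (T f) (ENNReal.ofReal r) ν ≤
      (ENNReal.ofReal (4 * r / (r - 2)) * B ^ 2 * (2 * K) ^ (r - 2)) ^ (1 / r) *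
        eLpNorm f (ENNReal.ofReal (r / (r - 1))) μ := by
  have hr0 : 0 < r := by linarith
  have hr1 : 0 < r - 1 := by linarith
  have hq : 0 < r / (r - 1) := div_pos hr0 hr1
  rw [← ENNReal.rpow_le_rpow_iff hr0, ENNReal.mul_rpow_of_nonneg _ _ hr0.le, ← ENNReal.rpow_mul,
    one_div_mul_cancel hr0.ne', ENNReal.rpow_one, eLpNorm_ofReal_rpow _ hr0]
  refine (lintegral_rpow_enorm_le_of_eLpNorm_top_le_of_eLpNorm_two_le hsub hT h₁ h₂ hr hf
    ?_).trans_eq ?_ <;> rw [← eLpNorm_ofReal_rpow _ hq]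
  · exact ENNReal.rpow_ne_top_of_nonneg hq.le hfin
  · rw [← ENNReal.rpow_mul, div_mul_cancel₀ _ hr1.ne']

end Interpolation

section KernelOperator

variable {X Y 𝕜 : Type*} [MeasurableSpace X] [MeasurableSpace Y] [RCLike 𝕜]
  {μ : Measure X} {ν : Measure Y} {K : Y → X → 𝕜} {M : NNReal}

lemma eLpNorm_top_integral_mul_le (hM : ∀ᵐ y ∂ν, ∀ᵐ x ∂μ, ‖K y x‖ₑ ≤ M) (u : X → 𝕜) :
    eLpNorm (fun y => ∫ x, K y x * u x ∂μ) ⊤ ν ≤ M * eLpNorm u 1 μ := by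
  rw [eLpNorm_exponent_top, eLpNorm_one_eq_lintegral_enorm]
  refine eLpNormEssSup_le_of_ae_enorm_bound (hM.mono fun y hy => ?_)
  rw [← lintegral_const_mul' _ _ ENNReal.coe_ne_top]
  refine (enorm_integral_le_lintegral_enorm _).trans (lintegral_mono_ae (hy.mono fun x hx => ?_))
  rw [enorm_mul]
  gcongr

lemma ae_integral_mul_add_eq [SFinite μ]
    (hK : AEStronglyMeasurable (Function.uncurry K) (ν.prod μ))
    (hM : ∀ᵐ y ∂ν, ∀ᵐ x ∂μ, ‖K y x‖ₑ ≤ M) {u v : X → 𝕜} (hu : Integrable u μ)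
    (hv : Integrable v μ) :
    ∀ᵐ y ∂ν, ∫ x, K y x * (u + v) x ∂μ = ∫ x, K y x * u x ∂μ + ∫ x, K y x * v x ∂μ := by
  filter_upwards [hM, hK.prodMk_left] with y hMy (hKy : AEStronglyMeasurable (K y) μ)
  have hbound : ∀ᵐ x ∂μ, ‖K y x‖ ≤ M := hMy.mono fun x hx => mod_cast hx
  rw [← integral_add (hu.bdd_mul hKy hbound) (hv.bdd_mul hKy hbound)]
  simp only [Pi.add_apply, mul_add]

theorem exists_eLpNorm_integral_mul_le [SFinite μ] {r : ℝ} (hr : 2 ≤ r) {B : ENNReal}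
    (hB : B ≠ ⊤) :
    ∃ C : ENNReal, C ≠ ⊤ ∧ ∀ (K : Y → X → 𝕜) (M : NNReal),
      AEStronglyMeasurable (Function.uncurry K) (ν.prod μ) →
      (∀ᵐ y ∂ν, ∀ᵐ x ∂μ, ‖K y x‖ₑ ≤ M) →
      (∀ u, Integrable u μ →
        eLpNorm (fun y => ∫ x, K y x * u x ∂μ) 2 ν ≤ B * eLpNorm u 2 μ) →
      ∀ f, Integrable f μ → eLpNorm f (ENNReal.ofReal (r / (r - 1))) μ ≠ ⊤ →
        eLpNorm (fun y => ∫ x, K y x * f x ∂μ) (ENNReal.ofReal r) ν ≤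
          C * M ^ ((r - 2) / r) * eLpNorm f (ENNReal.ofReal (r / (r - 1))) μ := by
  rcases hr.eq_or_lt with rfl | hr
  · refine ⟨B, hB, fun K M _ _ h₂ f hf _ => ?_⟩
    have h2 : (2 : ℝ) / (2 - 1) = 2 := by norm_num
    simpa [h2] using h₂ f hf
  have : 0 < r := by linarith
  refine ⟨(ENNReal.ofReal (4 * r / (r - 2)) * B ^ 2 * 2 ^ (r - 2)) ^ (1 / r), ?_,
    fun K M hK hM h₂ f hf hfin => ?_⟩
  · have : 0 ≤ r - 2 := by linarith
    finiteness
  refine (eLpNorm_le_of_eLpNorm_top_le_of_eLpNorm_two_le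
    (T := fun u y => ∫ x, K y x * u x ∂μ) (fun u v hu hv => ?_)
    (fun u hu => (hK.mul hu.1.comp_snd).integral_prod_right')
    (fun u _ => eLpNorm_top_integral_mul_le hM u) h₂ hr hf hfin).trans_eq ?_
  · filter_upwards [ae_integral_mul_add_eq hK hM hu hv] with y hy
    exact hy ▸ enorm_add_le _ _
  · rw [ENNReal.mul_rpow_of_nonneg 2 _ (by linarith), ← mul_assoc,
      ENNReal.mul_rpow_of_nonneg _ (_ ^ (r - 2)) (by positivity), ← ENNReal.rpow_mul, mul_one_div]

end KernelOperator

/-! ### The Schrödinger kernel -/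

lemma exists_Skernel_eq (a : ℝ) {t : ℝ} (ht : t ≠ 0) :
    ∃ c m : ℝ → ℂ, Continuous c ∧ Continuous m ∧ (∀ x, ‖c x‖ = 1) ∧ (∀ y, ‖m y‖ = 1) ∧
      ∀ x > 0, ∀ y > 0, Skernel a x y t =
        c x * (((2 * |t|) ^ (-(a + 1) / 2) : ℝ) : ℂ) *
          (besselEntire ((a - 1) / 2) (x * y / (2 * |t|)) : ℂ) * m y := by
  have hnorm (s : ℝ) : ‖Complex.exp (Complex.I * (s : ℂ))‖ = 1 := Complex.norm_exp_I_mul_ofReal s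
  have hnorm_neg (s : ℝ) : ‖Complex.exp (-Complex.I * (s : ℂ))‖ = 1 := by
    simpa using hnorm (-s)
  have hJ : ∀ x > 0, ∀ y > 0, (((x * y / (2 * |t|)) ^ ((1 - a) / 2) : ℝ) : ℂ) *
      besselJ (((a - 1) / 2 : ℝ) : ℂ) (x * y / (2 * |t|)) =
      (besselEntire ((a - 1) / 2) (x * y / (2 * |t|)) : ℂ) := fun x hx y hy => by
    have : 0 < |t| := abs_pos.2 ht
    rw [← rpow_neg_mul_besselJ _ (by positivity), show -((a - 1) / 2) = (1 - a) / 2 by ring]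
  by_cases h : 0 < t
  · refine ⟨fun x => Complex.exp (-(Complex.I) * (((a + 1) * Real.pi / 4 : ℝ) : ℂ)) *
        Complex.exp (Complex.I * ((x ^ 2 / (4 * |t|) : ℝ) : ℂ)),
      fun y => Complex.exp (Complex.I * ((y ^ 2 / (4 * |t|) : ℝ) : ℂ)), by fun_prop, by fun_prop,
      fun x => by rw [norm_mul, hnorm, hnorm_neg, one_mul], fun y => hnorm _,
      fun x hx y hy => ?_⟩
    rw [← hJ x hx y hy, Skernel, if_pos h, add_div, Complex.ofReal_add, mul_add, Complex.exp_add]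
    ring
  · refine ⟨fun x => Complex.exp ((Complex.I) * (((a + 1) * Real.pi / 4 : ℝ) : ℂ)) *
        Complex.exp (-Complex.I * ((x ^ 2 / (4 * |t|) : ℝ) : ℂ)),
      fun y => Complex.exp (-Complex.I * ((y ^ 2 / (4 * |t|) : ℝ) : ℂ)), by fun_prop, by fun_prop,
      fun x => by rw [norm_mul, hnorm, hnorm_neg, one_mul], fun y => hnorm_neg _,
      fun x hx y hy => ?_⟩
    rw [← hJ x hx y hy, Skernel, if_neg h, add_div, Complex.ofReal_add, mul_add, Complex.exp_add]
    ring

/-- The weight complementary to `k1`: their product is `x ^ (a / 2)`. -/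
noncomputable def coweight (a x : ℝ) : ℝ := max 1 (x ^ (a / 2))

lemma one_le_coweight (a x : ℝ) : 1 ≤ coweight a x := le_max_left _ _

lemma coweight_pos (a x : ℝ) : 0 < coweight a x := one_pos.trans_le (one_le_coweight a x)

lemma k1_mul_coweight (a x : ℝ) : k1 a x * coweight a x = x ^ (a / 2) := by
  rw [k1, coweight, min_mul_max, one_mul]

lemma k1_pos (a : ℝ) {x : ℝ} (hx : 0 < x) : 0 < k1 a x := lt_min one_pos (Real.rpow_pos_of_pos hx _)

lemma k1_le_one (a x : ℝ) : k1 a x ≤ 1 := min_le_left _ _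

lemma sq_rpow_half (a : ℝ) {x : ℝ} (hx : 0 < x) : (x ^ (a / 2)) ^ 2 = x ^ a := by
  rw [← Real.rpow_mul_natCast hx.le]
  norm_num

lemma k1_sq_mul_coweight_sq (a : ℝ) {x : ℝ} (hx : 0 < x) :
    k1 a x ^ 2 * coweight a x ^ 2 = x ^ a := by
  rw [← mul_pow, k1_mul_coweight, sq_rpow_half a hx]

lemma k1_mul_rpow_neg_le_one (a : ℝ) {x : ℝ} (hx : 0 < x) : k1 a x * x ^ (-(a / 2)) ≤ 1 := by
  rw [Real.rpow_neg hx.le, ← div_eq_mul_inv, div_le_one (Real.rpow_pos_of_pos hx _)]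
  exact min_le_right _ _

@[fun_prop]
lemma measurable_k1 (a : ℝ) : Measurable (k1 a) := by
  unfold k1
  fun_prop

@[fun_prop]
lemma measurable_coweight (a : ℝ) : Measurable (coweight a) := by
  unfold coweight
  fun_prop

lemma exists_norm_Skernel_le (a : ℝ) :
    ∃ C > 0, ∀ t ≠ 0, ∀ x > 0, ∀ y > 0, ‖Skernel a x y t‖ ≤
      C * ((2 * |t|) ^ (-(a + 1) / 2) +
        (2 * |t|) ^ (-(1 / 2) : ℝ) * (x ^ (-(a / 2)) * y ^ (-(a / 2)))) := by
  obtain ⟨D, hD, hbound⟩ := exists_abs_besselEntire_le ((a - 1) / 2)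
  refine ⟨D, hD, fun t ht x hx y hy => ?_⟩
  obtain ⟨c, m, -, -, hc, hm, hS⟩ := exists_Skernel_eq a ht
  have : 0 < |t| := abs_pos.2 ht
  have hscale : (2 * |t|) ^ (-(a + 1) / 2) * (x * y / (2 * |t|)) ^ (-((a - 1) / 2 + 1 / 2)) =
      (2 * |t|) ^ (-(1 / 2) : ℝ) * (x ^ (-(a / 2)) * y ^ (-(a / 2))) := by
    rw [show -((a - 1) / 2 + 1 / 2) = -(a / 2) by ring, Real.div_rpow (by positivity)
      (by positivity), Real.mul_rpow hx.le hy.le,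
      show -(a + 1) / 2 = -(1 / 2) + -(a / 2) by ring, Real.rpow_add (by positivity)]
    field_simp
  calc ‖Skernel a x y t‖
      = (2 * |t|) ^ (-(a + 1) / 2) * |besselEntire ((a - 1) / 2) (x * y / (2 * |t|))| := by
        rw [hS x hx y hy, norm_mul, norm_mul, norm_mul, hc, hm, one_mul, mul_one,
          Complex.norm_real, Complex.norm_real, Real.norm_of_nonneg (by positivity),
          Real.norm_eq_abs]
    _ ≤ (2 * |t|) ^ (-(a + 1) / 2) *
          (D * (1 + (x * y / (2 * |t|)) ^ (-((a - 1) / 2 + 1 / 2)))) := by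
        gcongr
        exact hbound _ (by positivity)
    _ = _ := by linear_combination D * hscale

/-- The sum of the two rates of decay of the kernel of `S_a(t)`. -/
noncomputable def decayRate (a t : ℝ) : ℝ := |t| ^ (-(a + 1) / 2) + |t| ^ (-(1 / 2) : ℝ)

lemma exists_k1_mul_norm_Skernel_mul_k1_le {a : ℝ} (ha : -1 < a) :
    ∃ C > 0, ∀ t ≠ 0, ∀ x > 0, ∀ y > 0,
      k1 a x * ‖Skernel a x y t‖ * k1 a y ≤ C * decayRate a t := by
  obtain ⟨D, hD, hbound⟩ := exists_norm_Skernel_le a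
  refine ⟨D, hD, fun t ht x hx y hy => ?_⟩
  have hrate {e : ℝ} (he : e ≤ 0) : (2 * |t|) ^ e ≤ |t| ^ e :=
    Real.rpow_le_rpow_of_nonpos (abs_pos.2 ht) (by linarith [abs_nonneg t]) he
  have hkx := k1_pos a hx
  have hky := k1_pos a hy
  calc k1 a x * ‖Skernel a x y t‖ * k1 a y
      ≤ k1 a x * (D * ((2 * |t|) ^ (-(a + 1) / 2) +
          (2 * |t|) ^ (-(1 / 2) : ℝ) * (x ^ (-(a / 2)) * y ^ (-(a / 2))))) * k1 a y := by
        gcongr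
        exact hbound t ht x hx y hy
    _ = D * ((2 * |t|) ^ (-(a + 1) / 2) * (k1 a x * k1 a y) +
          (2 * |t|) ^ (-(1 / 2) : ℝ) * (k1 a x * x ^ (-(a / 2)) * (k1 a y * y ^ (-(a / 2))))) := by
        ring
    _ ≤ D * (|t| ^ (-(a + 1) / 2) * (1 * 1) + |t| ^ (-(1 / 2) : ℝ) * (1 * 1)) := by
        have h₁ := hrate (e := -(a + 1) / 2) (by linarith)
        have h₂ := hrate (e := -(1 / 2)) (by norm_num)
        have hx₁ := k1_le_one a x
        have hy₁ := k1_le_one a y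
        have hx₂ := k1_mul_rpow_neg_le_one a hx
        have hy₂ := k1_mul_rpow_neg_le_one a hy
        gcongr
    _ = D * decayRate a t := by rw [decayRate]; ring

/-- The measure `k1(x)⁻² x^a dx` on `(0, ∞)`, for which the multiplier `k1 ^ (1 - 2 / q)` in the
`L^q_a` norms turns into `k1` for every `q`. -/
noncomputable def weightMeasure (a : ℝ) : Measure ℝ :=
  (volume.restrict (Ioi 0)).withDensity fun x => ENNReal.ofReal (coweight a x ^ 2)

instance (a : ℝ) : SFinite (weightMeasure a) := by
  unfold weightMeasure
  infer_instance

lemma lintegral_weightMeasure (a : ℝ) (F : ℝ → ENNReal) :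
    ∫⁻ x, F x ∂(weightMeasure a) = ∫⁻ x in Ioi 0, ENNReal.ofReal (coweight a x ^ 2) * F x :=
  lintegral_withDensity_eq_lintegral_mul_non_measurable _ (by fun_prop)
    (ae_of_all _ fun _ => ENNReal.ofReal_lt_top) F

lemma integral_weightMeasure {E : Type*} [NormedAddCommGroup E] [NormedSpace ℝ E] (a : ℝ)
    (F : ℝ → E) :
    ∫ x, F x ∂(weightMeasure a) = ∫ x in Ioi 0, coweight a x ^ 2 • F x := by
  rw [weightMeasure, integral_withDensity_eq_integral_toReal_smul (by fun_prop)
    (ae_of_all _ fun _ => ENNReal.ofReal_lt_top)]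
  simp only [ENNReal.toReal_ofReal (sq_nonneg _)]

lemma ae_weightMeasure_pos (a : ℝ) : ∀ᵐ x ∂(weightMeasure a), 0 < x :=
  (withDensity_absolutelyContinuous _ _).ae_le (ae_restrict_mem measurableSet_Ioi)

lemma integrable_weightMeasure_iff (a : ℝ) {E : Type*} [NormedAddCommGroup E] [NormedSpace ℝ E]
    {F : ℝ → E} :
    Integrable F (weightMeasure a) ↔ IntegrableOn (fun x => coweight a x ^ 2 • F x) (Ioi 0) := by
  rw [weightMeasure, integrable_withDensity_iff_integrable_smul' (by fun_prop)
    (ae_of_all _ fun _ => ENNReal.ofReal_lt_top)]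
  simp only [ENNReal.toReal_ofReal (sq_nonneg _), IntegrableOn]

lemma eLpNorm_two_weightMeasure (a : ℝ) (u : ℝ → ℂ) :
    eLpNorm u 2 (weightMeasure a) =
      eLpNorm (fun x => (coweight a x : ℂ) * u x) 2 (volume.restrict (Ioi 0)) := by
  refine (ENNReal.pow_right_strictMono two_ne_zero).injective ?_
  rw [eLpNorm_two_sq, eLpNorm_two_sq, lintegral_weightMeasure]
  refine lintegral_congr fun x => ?_
  rw [enorm_mul, mul_pow, ENNReal.ofReal_pow (coweight_pos a x).le,
    ← ofReal_norm (coweight a x : ℂ), Complex.norm_of_nonneg (coweight_pos a x).le]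

lemma integrableOn_coweight_mul {a : ℝ} {u : ℝ → ℂ} (hu : Integrable u (weightMeasure a)) :
    IntegrableOn (fun x => (coweight a x : ℂ) * u x) (Ioi 0) := by
  have hmeas : AEStronglyMeasurable (fun x => ((coweight a x : ℂ))⁻¹) (volume.restrict (Ioi 0)) :=
    Measurable.aestronglyMeasurable (by fun_prop)
  refine (((integrable_weightMeasure_iff a).1 hu).bdd_mul (c := 1) hmeas
    (ae_of_all _ fun x => ?_)).congr (ae_of_all _ fun x => ?_)
  · rw [norm_inv, Complex.norm_of_nonneg (coweight_pos a x).le]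
    exact inv_le_one_of_one_le₀ (one_le_coweight a x)
  · have hw : (coweight a x : ℂ) ≠ 0 := Complex.ofReal_ne_zero.2 (coweight_pos a x).ne'
    simp only [Complex.real_smul, Complex.ofReal_pow]
    field_simp

/-- The kernel of `k1 S_a(t) k1⁻¹` with respect to `weightMeasure a`. -/
noncomputable def weightedKernel (a t x y : ℝ) : ℂ := k1 a x * Skernel a x y t * k1 a y

lemma integral_weightedKernel_mul_k1_mul (a t : ℝ) (φ : ℝ → ℂ) (x : ℝ) :
    ∫ y, weightedKernel a t x y * (k1 a y * φ y) ∂(weightMeasure a) = k1 a x * Sop a t φ x := by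
  rw [integral_weightMeasure, Sop, ← integral_const_mul]
  refine setIntegral_congr_fun measurableSet_Ioi fun y hy => ?_
  simp only [← k1_sq_mul_coweight_sq a hy, weightedKernel, Complex.real_smul]
  push_cast
  ring

lemma aestronglyMeasurable_weightedKernel (a : ℝ) {t : ℝ} (ht : t ≠ 0) :
    AEStronglyMeasurable (Function.uncurry (weightedKernel a t))
      ((weightMeasure a).prod (weightMeasure a)) := by
  obtain ⟨c, m, hc, hm, -, -, hS⟩ := exists_Skernel_eq a ht
  have hH := continuous_besselEntire ((a - 1) / 2)
  have hmeas : Measurable fun p : ℝ × ℝ => (k1 a p.1 : ℂ) *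
      (c p.1 * (((2 * |t|) ^ (-(a + 1) / 2) : ℝ) : ℂ) *
        (besselEntire ((a - 1) / 2) (p.1 * p.2 / (2 * |t|)) : ℂ) * m p.2) * k1 a p.2 := by
    fun_prop
  refine hmeas.aestronglyMeasurable.congr ?_
  filter_upwards [Measure.quasiMeasurePreserving_fst.ae (ae_weightMeasure_pos a),
    Measure.quasiMeasurePreserving_snd.ae (ae_weightMeasure_pos a)] with p hx hy
  simp only [Function.uncurry, weightedKernel, hS _ hx _ hy]

lemma exists_enorm_weightedKernel_le {a : ℝ} (ha : -1 < a) :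
    ∃ C > 0, ∀ t ≠ 0, ∀ᵐ x ∂(weightMeasure a), ∀ᵐ y ∂(weightMeasure a),
      ‖weightedKernel a t x y‖ₑ ≤ (C * decayRate a t).toNNReal := by
  obtain ⟨C, hC, hbound⟩ := exists_k1_mul_norm_Skernel_mul_k1_le ha
  refine ⟨C, hC, fun t ht => ?_⟩
  filter_upwards [ae_weightMeasure_pos a] with x hx
  filter_upwards [ae_weightMeasure_pos a] with y hy
  rw [← ofReal_norm, ← ENNReal.ofReal, weightedKernel, norm_mul, norm_mul,
    Complex.norm_of_nonneg (k1_pos a hx).le, Complex.norm_of_nonneg (k1_pos a hy).le]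
  exact ENNReal.ofReal_le_ofReal (hbound t ht x hx y hy)

lemma exists_coweight_mul_integral_weightedKernel_eq (a : ℝ) {t : ℝ} (ht : t ≠ 0) :
    ∃ c m : ℝ → ℂ, Continuous m ∧ (∀ x, ‖c x‖ = 1) ∧ (∀ y, ‖m y‖ = 1) ∧
      ∀ u : ℝ → ℂ, ∀ x > 0,
        (coweight a x : ℂ) * ∫ y, weightedKernel a t x y * u y ∂(weightMeasure a) =
          c x * (((2 * |t|) ^ (-(1 / 2) : ℝ) : ℝ) : ℂ) *
            hankelTransform ((a - 1) / 2) (fun y => m y * (coweight a y * u y))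
              ((2 * |t|)⁻¹ * x) := by
  obtain ⟨c, m, -, hm, hc1, hm1, hS⟩ := exists_Skernel_eq a ht
  refine ⟨c, m, hm, hc1, hm1, fun u x hx => ?_⟩
  have hτ : 0 < 2 * |t| := by positivity
  rw [integral_weightMeasure, hankelTransform, ← integral_const_mul, ← integral_const_mul]
  refine setIntegral_congr_fun measurableSet_Ioi fun y (hy : 0 < y) => ?_
  have hsqrt : (2 * |t|) ^ (-(1 / 2) : ℝ) * sqrtBessel ((a - 1) / 2) ((2 * |t|)⁻¹ * x * y) =
      (k1 a x * coweight a x) * (k1 a y * coweight a y) * (2 * |t|) ^ (-(a + 1) / 2) *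
        besselEntire ((a - 1) / 2) (x * y / (2 * |t|)) := by
    rw [k1_mul_coweight, k1_mul_coweight, sqrtBessel,
      show (2 * |t|)⁻¹ * x * y = x * y / (2 * |t|) by ring,
      show (a - 1) / 2 + 1 / 2 = a / 2 by ring, Real.div_rpow (by positivity) hτ.le,
      Real.mul_rpow hx.le hy.le, show -(a + 1) / 2 = -(1 / 2) - a / 2 by ring, Real.rpow_sub hτ]
    ring
  have hsqrt' := congrArg (fun s : ℝ => (s : ℂ)) hsqrt
  push_cast at hsqrt'
  simp only [weightedKernel, hS x hx y hy, Complex.real_smul]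
  push_cast
  linear_combination (-c x * m y * coweight a y * u y) * hsqrt'

lemma eLpNorm_two_dilation {E : Type*} [NormedAddCommGroup E] [NormedSpace ℝ E] (g : ℝ → E)
    {c : ℝ} (hc : 0 < c) :
    eLpNorm (fun x => c ^ (1 / 2 : ℝ) • g (c * x)) 2 (volume.restrict (Ioi 0)) =
      eLpNorm g 2 (volume.restrict (Ioi 0)) := by
  refine (ENNReal.pow_right_strictMono two_ne_zero).injective ?_
  have hsq (x : ℝ) : ‖c ^ (1 / 2 : ℝ) • g (c * x)‖ₑ ^ 2 = ENNReal.ofReal c * ‖g (c * x)‖ₑ ^ 2 := by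
    rw [enorm_smul, mul_pow, Real.enorm_of_nonneg (by positivity),
      ← ENNReal.ofReal_pow (by positivity), sq_rpow_half 1 hc, Real.rpow_one]
  simp only [eLpNorm_two_sq, hsq]
  rw [lintegral_const_mul' _ _ ENNReal.ofReal_ne_top,
    lintegral_Ioi_comp_mul_left (fun x => ‖g x‖ₑ ^ 2) hc, ← mul_assoc, ← ENNReal.ofReal_mul hc.le,
    mul_inv_cancel₀ hc.ne', ENNReal.ofReal_one, one_mul]

lemma exists_eLpNorm_two_integral_weightedKernel_le {a : ℝ} (ha : -1 < a) :
    ∃ B : ENNReal, B ≠ ⊤ ∧ ∀ t ≠ 0, ∀ u, Integrable u (weightMeasure a) →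
      eLpNorm (fun x => ∫ y, weightedKernel a t x y * u y ∂(weightMeasure a)) 2 (weightMeasure a) ≤
        B * eLpNorm u 2 (weightMeasure a) := by
  obtain ⟨B, hB, hH⟩ := exists_eLpNorm_hankelTransform_le (ν := (a - 1) / 2) (by linarith)
  refine ⟨B, hB, fun t ht u hu => ?_⟩
  obtain ⟨c, m, hm, hc1, hm1, hT⟩ := exists_coweight_mul_integral_weightedKernel_eq a ht
  have hτ : 0 < 2 * |t| := by positivity
  set f : ℝ → ℂ := fun y => m y * (coweight a y * u y)
  have hf : IntegrableOn f (Ioi 0) := (integrableOn_coweight_mul hu).bdd_mul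
    hm.aestronglyMeasurable (ae_of_all _ fun y => (hm1 y).le)
  calc eLpNorm (fun x => ∫ y, weightedKernel a t x y * u y ∂(weightMeasure a)) 2 (weightMeasure a)
      = eLpNorm (hankelTransform ((a - 1) / 2) f) 2 (volume.restrict (Ioi 0)) := by
        rw [eLpNorm_two_weightMeasure,
          ← eLpNorm_two_dilation (hankelTransform _ f) (inv_pos.2 hτ)]
        refine eLpNorm_congr_norm_ae ?_
        filter_upwards [ae_restrict_mem measurableSet_Ioi] with x hx
        rw [hT u x hx, norm_mul, norm_mul, hc1, one_mul, norm_smul, Complex.norm_real,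
          Real.inv_rpow hτ.le, ← Real.rpow_neg hτ.le]
    _ ≤ B * eLpNorm f 2 (volume.restrict (Ioi 0)) := hH f hf
    _ = B * eLpNorm u 2 (weightMeasure a) := by
        rw [eLpNorm_two_weightMeasure]
        congr 1
        refine eLpNorm_congr_enorm_ae (ae_of_all _ fun y => ?_)
        rw [enorm_mul, ← ofReal_norm, hm1, ENNReal.ofReal_one, one_mul]

/-! ### The interpolated estimate -/

lemma memLp_of_integrable_of_bound {X E : Type*} [MeasurableSpace X] {μ : Measure X}
    [NormedAddCommGroup E] {f : X → E} (hf : Integrable f μ) {C : ℝ}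
    (hC : ∀ᵐ x ∂μ, ‖f x‖ ≤ C) {p : ℝ} (hp : 1 ≤ p) : MemLp f (ENNReal.ofReal p) μ := by
  have hp0 : 0 < p := one_pos.trans_le hp
  have hp1 : 0 ≤ p - 1 := sub_nonneg.2 hp
  refine ⟨hf.1, (ENNReal.rpow_lt_top_iff_of_pos hp0).1 ?_⟩
  rw [eLpNorm_ofReal_rpow _ hp0]
  calc ∫⁻ x, ‖f x‖ₑ ^ p ∂μ
      ≤ ∫⁻ x, ENNReal.ofReal C ^ (p - 1) * ‖f x‖ₑ ∂μ := by
        refine lintegral_mono_ae (hC.mono fun x hx => ?_)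
        conv_lhs => rw [← sub_add_cancel p 1,
          ENNReal.rpow_add_of_nonneg _ _ hp1 zero_le_one, ENNReal.rpow_one]
        have : ‖f x‖ₑ ≤ ENNReal.ofReal C := ofReal_norm (f x) ▸ ENNReal.ofReal_le_ofReal hx
        gcongr
    _ < ⊤ := by
        rw [lintegral_const_mul' _ _ (by finiteness)]
        exact ENNReal.mul_lt_top (by finiteness) hf.2

lemma SPlus.exists_norm_le {φ : ℝ → ℂ} (hφ : SPlus φ) : ∃ C, ∀ x > 0, ‖φ x‖ ≤ C := by
  simpa [DIter] using hφ.2 0 0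

lemma SPlus.integrableOn_rpow_smul {φ : ℝ → ℂ} (hφ : SPlus φ) {b : ℝ} (hb : -1 < b) :
    IntegrableOn (fun x => x ^ b • φ x) (Ioi 0) := by
  obtain ⟨m, hm⟩ := exists_nat_gt (b + 1)
  obtain ⟨C₀, hC₀⟩ := hφ.exists_norm_le
  obtain ⟨C, hC⟩ := hφ.2 m 0
  have htop : φ =O[atTop] fun x : ℝ => x ^ (-(m : ℝ)) := by
    refine Asymptotics.IsBigO.of_bound C ?_
    filter_upwards [eventually_gt_atTop 0] with x hx
    have h := hC x hx
    rw [norm_mul, norm_pow, Complex.norm_of_nonneg hx.le] at h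
    rw [Real.norm_of_nonneg (by positivity), Real.rpow_neg hx.le, Real.rpow_natCast,
      ← div_eq_mul_inv, le_div_iff₀' (by positivity)]
    exact h
  have hzero : φ =O[nhdsWithin 0 (Ioi 0)] fun x : ℝ => x ^ (-(0 : ℝ)) := by
    refine Asymptotics.IsBigO.of_bound C₀ (eventually_mem_nhdsWithin.mono fun x hx => ?_)
    simpa using hC₀ x hx
  have h : MellinConvergent φ ((b + 1 : ℝ) : ℂ) := mellinConvergent_of_isBigO_rpow
    (hφ.1.continuousOn.locallyIntegrableOn measurableSet_Ioi) htop hm hzero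
    (by simpa using by linarith)
  refine IntegrableOn.congr_fun h (fun x hx => ?_) measurableSet_Ioi
  simp only [Complex.ofReal_add, Complex.ofReal_one, add_sub_cancel_right, Complex.real_smul,
    Complex.ofReal_cpow (le_of_lt hx)]
  rw [smul_eq_mul]

lemma SPlus.integrable_k1_mul {φ : ℝ → ℂ} (hφ : SPlus φ) {a : ℝ} (ha : -1 < a) :
    Integrable (fun x => (k1 a x : ℂ) * φ x) (weightMeasure a) := by
  have hsum := (hφ.integrableOn_rpow_smul (b := a / 2) (by linarith)).norm.add
    (hφ.integrableOn_rpow_smul ha).norm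
  refine (integrable_weightMeasure_iff a).2 (hsum.mono' ?_ ?_)
  · have : AEStronglyMeasurable φ (volume.restrict (Ioi 0)) :=
      hφ.1.continuousOn.aestronglyMeasurable measurableSet_Ioi
    exact (by fun_prop : Measurable fun x => coweight a x ^ 2).aestronglyMeasurable.smul
      ((by fun_prop : Measurable fun x => (k1 a x : ℂ)).aestronglyMeasurable.mul this)
  filter_upwards [ae_restrict_mem measurableSet_Ioi] with x (hx : 0 < x)
  have hw : coweight a x ^ 2 * k1 a x ≤ x ^ (a / 2) + x ^ a :=
    calc coweight a x ^ 2 * k1 a x = x ^ (a / 2) * coweight a x := by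
          rw [← k1_mul_coweight]; ring
      _ ≤ x ^ (a / 2) * (1 + x ^ (a / 2)) := by
          gcongr
          exact max_le_add_of_nonneg zero_le_one (by positivity)
      _ = x ^ (a / 2) + x ^ a := by rw [← sq_rpow_half a hx]; ring
  calc ‖coweight a x ^ 2 • ((k1 a x : ℂ) * φ x)‖ = coweight a x ^ 2 * k1 a x * ‖φ x‖ := by
        rw [norm_smul, norm_mul, Complex.norm_of_nonneg (k1_pos a hx).le,
          Real.norm_of_nonneg (sq_nonneg _), mul_assoc]
    _ ≤ (x ^ (a / 2) + x ^ a) * ‖φ x‖ := by gcongr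
    _ = ‖x ^ (a / 2) • φ x‖ + ‖x ^ a • φ x‖ := by
        rw [norm_smul, norm_smul, Real.norm_of_nonneg (by positivity),
          Real.norm_of_nonneg (by positivity), add_mul]

lemma SPlus.memLp_k1_mul {φ : ℝ → ℂ} (hφ : SPlus φ) {a : ℝ} (ha : -1 < a) {p : ℝ} (hp : 1 ≤ p) :
    MemLp (fun x => (k1 a x : ℂ) * φ x) (ENNReal.ofReal p) (weightMeasure a) := by
  obtain ⟨C, hC⟩ := hφ.exists_norm_le
  refine memLp_of_integrable_of_bound (hφ.integrable_k1_mul ha) (C := C) ?_ hp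
  filter_upwards [ae_weightMeasure_pos a] with x hx
  rw [norm_mul, Complex.norm_of_nonneg (k1_pos a hx).le]
  exact (mul_le_of_le_one_left (norm_nonneg _) (k1_le_one a x)).trans (hC x hx)

lemma norm_mul_k1_rpow_mul_rpow (a : ℝ) {q : ℝ} (hq : q ≠ 0) {x : ℝ} (hx : 0 < x) (z : ℂ) :
    ‖z * ((k1 a x ^ (1 - 2 / q) : ℝ) : ℂ)‖ ^ q * x ^ a =
      coweight a x ^ 2 * ‖(k1 a x : ℂ) * z‖ ^ q := by
  have hk := k1_pos a hx
  have hpow : (k1 a x ^ (1 - 2 / q)) ^ q * k1 a x ^ 2 = k1 a x ^ q := by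
    rw [← Real.rpow_mul hk.le, ← Real.rpow_two, ← Real.rpow_add hk]
    congr 1
    field_simp
    ring
  rw [norm_mul, norm_mul, Complex.norm_of_nonneg (by positivity), Complex.norm_of_nonneg hk.le,
    Real.mul_rpow (norm_nonneg _) (by positivity), Real.mul_rpow hk.le (norm_nonneg _), ← hpow,
    ← k1_sq_mul_coweight_sq a hx]
  ring

lemma LrA_mul_k1_rpow (a : ℝ) {q : ℝ} (hq : 0 < q) {F : ℝ → ℂ}
    (hF : AEStronglyMeasurable (fun x => (k1 a x : ℂ) * F x) (weightMeasure a)) :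
    LrA a q (fun x => F x * ((k1 a x ^ (1 - 2 / q) : ℝ) : ℂ)) =
      (eLpNorm (fun x => (k1 a x : ℂ) * F x) (ENNReal.ofReal q) (weightMeasure a)).toReal := by
  rw [toReal_eLpNorm hF, lpNorm_eq_integral_norm_rpow_toReal (ENNReal.ofReal_pos.2 hq).ne'
    ENNReal.ofReal_ne_top hF, ENNReal.toReal_ofReal hq.le, integral_weightMeasure, LrA, one_div]
  congr 1
  exact setIntegral_congr_fun measurableSet_Ioi fun x hx =>
    norm_mul_k1_rpow_mul_rpow a hq.ne' hx (F x)

lemma aestronglyMeasurable_k1_mul_Sop {a t : ℝ} (ht : t ≠ 0) {φ : ℝ → ℂ}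
    (hφ : AEStronglyMeasurable (fun x => (k1 a x : ℂ) * φ x) (weightMeasure a)) :
    AEStronglyMeasurable (fun x => (k1 a x : ℂ) * Sop a t φ x) (weightMeasure a) := by
  simp only [← integral_weightedKernel_mul_k1_mul]
  exact ((aestronglyMeasurable_weightedKernel a ht).mul hφ.comp_snd).integral_prod_right'

lemma decayRate_pos (a : ℝ) {t : ℝ} (ht : t ≠ 0) : 0 < decayRate a t := by
  have : 0 < |t| := abs_pos.2 ht
  unfold decayRate
  positivity

lemma decayRate_rpow_le (a : ℝ) {r t : ℝ} (hr : 2 ≤ r) (ht : t ≠ 0) :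
    decayRate a t ^ ((r - 2) / r) ≤
      |t| ^ (-(a + 1) * (1 / 2 - 1 / r)) + |t| ^ (-(1 / 2 - 1 / r)) := by
  have ht' : 0 < |t| := abs_pos.2 ht
  have hr0 : 0 < r := by linarith
  have hθ0 : 0 ≤ (r - 2) / r := div_nonneg (by linarith) hr0.le
  have hθ1 : (r - 2) / r ≤ 1 := (div_le_one hr0).2 (by linarith)
  have hθ : (r - 2) / r = 2 * (1 / 2 - 1 / r) := by field_simp
  refine (Real.rpow_add_le_add_rpow (by positivity) (by positivity) hθ0 hθ1).trans_eq ?_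
  rw [← Real.rpow_mul ht'.le, ← Real.rpow_mul ht'.le, hθ]
  congr 2 <;> ring

lemma exists_eLpNorm_k1_mul_Sop_le {a r : ℝ} (ha : -1 < a) (hr : 2 ≤ r) :
    ∃ C : ENNReal, C ≠ ⊤ ∧ ∀ t ≠ 0, ∀ φ : ℝ → ℂ,
      Integrable (fun x => (k1 a x : ℂ) * φ x) (weightMeasure a) →
      eLpNorm (fun x => (k1 a x : ℂ) * φ x) (ENNReal.ofReal (r / (r - 1))) (weightMeasure a) ≠ ⊤ →
      eLpNorm (fun x => (k1 a x : ℂ) * Sop a t φ x) (ENNReal.ofReal r) (weightMeasure a) ≤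
        C * ENNReal.ofReal (decayRate a t ^ ((r - 2) / r)) *
          eLpNorm (fun x => (k1 a x : ℂ) * φ x) (ENNReal.ofReal (r / (r - 1)))
            (weightMeasure a) := by
  obtain ⟨D, hD, hsup⟩ := exists_enorm_weightedKernel_le ha
  obtain ⟨B, hB, hL2⟩ := exists_eLpNorm_two_integral_weightedKernel_le ha
  obtain ⟨C, hC, hinterp⟩ := exists_eLpNorm_integral_mul_le (𝕜 := ℂ) (μ := weightMeasure a)
    (ν := weightMeasure a) hr hB
  have hθ : 0 ≤ (r - 2) / r := div_nonneg (by linarith) (by linarith)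
  refine ⟨C * ENNReal.ofReal D ^ ((r - 2) / r), by finiteness, fun t ht φ hφ hfin => ?_⟩
  have h := hinterp _ _ (aestronglyMeasurable_weightedKernel a ht) (hsup t ht) (hL2 t ht) _ hφ hfin
  simp only [integral_weightedKernel_mul_k1_mul] at h
  rwa [← ENNReal.ofReal, ENNReal.ofReal_mul hD.le, ENNReal.mul_rpow_of_nonneg _ _ hθ,
    ENNReal.ofReal_rpow_of_pos (decayRate_pos a ht), ← mul_assoc] at h

theorem weighted_dispersive_Lr_estimate_general (a r : ℝ) (ha : -1 < a) (hr : 2 ≤ r) :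
    ∃ C > (0 : ℝ), ∀ t : ℝ, t ≠ 0 → ∀ φ : ℝ → ℂ,
      Integrable (fun x => (k1 a x : ℂ) * φ x) (weightMeasure a) →
      eLpNorm (fun x => (k1 a x : ℂ) * φ x) (ENNReal.ofReal (r / (r - 1))) (weightMeasure a) ≠ ⊤ →
      LrA a r (fun x => Sop a t φ x * ((k1 a x ^ (1 - 2 / r) : ℝ) : ℂ)) ≤
        C * (|t| ^ (-(a + 1) * (1 / 2 - 1 / r)) + |t| ^ (-(1 / 2 - 1 / r))) *
          LrA a (r / (r - 1)) (fun x => φ x * ((k1 a x ^ (1 - 2 / (r / (r - 1))) : ℝ) : ℂ)) := by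
  obtain ⟨C, hC, hbound⟩ := exists_eLpNorm_k1_mul_Sop_le ha hr
  refine ⟨C.toReal + 1, by positivity, fun t ht φ hφ hfin => ?_⟩
  have hr' : 0 < r / (r - 1) := div_pos (by linarith) (by linarith)
  have hdecay := decayRate_pos a ht
  have htime := decayRate_rpow_le a hr ht
  rw [LrA_mul_k1_rpow a (by linarith) (aestronglyMeasurable_k1_mul_Sop ht hφ.1),
    LrA_mul_k1_rpow a hr' hφ.1]
  refine (ENNReal.toReal_mono (by finiteness) (hbound t ht φ hφ hfin)).trans ?_
  rw [ENNReal.toReal_mul, ENNReal.toReal_mul, ENNReal.toReal_ofReal (by positivity)]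
  gcongr
  exact le_add_of_nonneg_right zero_le_one

/-- Weighted interpolated dispersive estimate for `-1 < a < 0` and `r ≥ 2`. -/
theorem weighted_dispersive_Lr_estimate (a r : ℝ) (ha1 : -1 < a) (ha2 : a < 0) (hr : 2 ≤ r) :
    ∃ C > (0:ℝ), ∀ t : ℝ, t ≠ 0 → ∀ φ : ℝ → ℂ, SPlus φ →
      LrA a r (fun x => Sop a t φ x * ((k1 a x ^ (1 - 2 / r) : ℝ) : ℂ)) ≤
        C * (|t| ^ (-(a + 1) * (1 / 2 - 1 / r)) + |t| ^ (-(1 / 2 - 1 / r))) *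
          LrA a (r / (r - 1)) (fun x => φ x * ((k1 a x ^ (1 - 2 / (r / (r - 1))) : ℝ) : ℂ)) := by
  obtain ⟨C, hC, h⟩ := weighted_dispersive_Lr_estimate_general a r ha1 hr
  have hr' : 1 ≤ r / (r - 1) := (one_le_div (by linarith)).2 (by linarith)
  exact ⟨C, hC, fun t ht φ hφ => h t ht φ (hφ.integrable_k1_mul ha1) (hφ.memLp_k1_mul ha1 hr').2.ne⟩
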